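/- arXiv:2111.14477 — 7 statements merged into one kernel-verified Lean document; each statement's English description precedes it below -/
import Mathlib

section
/- Let n be odd and squarefree, let p' be a prime divisor of n, and let A = L(n;p'). Let S = (x_1,…,x_l) be a sequence in Z_n such that for every prime divisor p of n at least two terms of S are coprime to p. Let n' = n/p' and let S' be the image of S under the natural map Z_n → Z_{n'}. If at most one term of S' is a unit of Z_{n'}, then S is an A-weighted zero-sum sequence. -/
open scoped BigOperators

/-- `S` is an `A`-weighted zero-sum sequence in `ZMod n`. -/
def IsWZS {n : ℕ} (A : Set (ZMod n)) {l : ℕ} (S : Fin l → ZMod n) : Prop :=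
  ∃ a : Fin l → ZMod n, (∀ i, a i ∈ A) ∧ ∑ i, a i * S i = 0

/-- `S` has a nonempty subsequence which is an `A`-weighted zero-sum sequence. -/
def HasWZSSub {n : ℕ} (A : Set (ZMod n)) {l : ℕ} (S : Fin l → ZMod n) : Prop :=
  ∃ I : Finset (Fin l), I.Nonempty ∧ ∃ a : Fin l → ZMod n,
    (∀ i ∈ I, a i ∈ A) ∧ ∑ i ∈ I, a i * S i = 0

/-- The `A`-weighted Davenport constant of `ZMod n`: the least positive integer `k`
such that every sequence of `k` elements of `ZMod n` has a nonempty subsequence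
which is an `A`-weighted zero-sum sequence. -/
noncomputable def DavW (n : ℕ) (A : Set (ZMod n)) : ℕ :=
  sInf {k | 0 < k ∧ ∀ S : Fin k → ZMod n, HasWZSSub A S}

/-- An `A`-extremal sequence for the Davenport constant: a sequence of length
`D_A(n) - 1` with no nonempty `A`-weighted zero-sum subsequence. -/
def IsExtremal (n : ℕ) (A : Set (ZMod n)) {l : ℕ} (S : Fin l → ZMod n) : Prop :=
  l = DavW n A - 1 ∧ ¬ HasWZSSub A S

/-- The set of units of `ZMod n`, as a weight set. -/
def USet (n : ℕ) : Set (ZMod n) := {a | IsUnit a}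

/-- `S(n)`: the units `a` of `ZMod n` with Jacobi symbol `(a/n) = 1`. -/
def JSet (n : ℕ) : Set (ZMod n) := {a | IsUnit a ∧ jacobiSym (a.val : ℤ) n = 1}

/-- `L(n;p)`: the units `a` of `ZMod n` with `(a/n) = (a/p)`. -/
def LSet (n p : ℕ) : Set (ZMod n) :=
  {a | IsUnit a ∧ jacobiSym (a.val : ℤ) n = jacobiSym (a.val : ℤ) p}

/-- Two sequences are equivalent with respect to the weight set `A`. -/
def EquivWrt {n : ℕ} (A : Set (ZMod n)) {k : ℕ} (x y : Fin k → ZMod n) : Prop :=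
  ∃ (a : Fin k → ZMod n) (c : (ZMod n)ˣ) (σ : Equiv.Perm (Fin k)),
    (∀ i, a i ∈ A) ∧ ∀ i, y (σ i) = (c : ZMod n) * (a i * x i)

theorem aux_field {F : Type*} [Field F] (h2 : (2 : F) ≠ 0) {l : ℕ} (x : Fin l → F)
    (i j : Fin l) (hij : i ≠ j) (hi : x i ≠ 0) (hj : x j ≠ 0) :
    ∃ a : Fin l → F, (∀ k, a k ≠ 0) ∧ ∑ k, a k * x k = 0 := by
  set s := ∑ k, x k - x i - x j with hs
  obtain ⟨y, hy0, hys⟩ : ∃ y : F, y ≠ 0 ∧ -s - y ≠ 0 := by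
    by_cases h : -s - 1 = 0
    · refine ⟨-1, by simp, fun h' => h2 ?_⟩
      linear_combination h' - h
    · exact ⟨1, one_ne_zero, h⟩
  refine ⟨fun k => 1 + (if k = i then (y - x i) / x i else 0)
    + (if k = j then (-s - y - x j) / x j else 0), fun k => ?_, ?_⟩
  · by_cases hki : k = i
    · subst hki
      simp only [if_true, if_neg hij, add_zero]
      have : 1 + (y - x k) / x k = y / x k := by field_simp; ring
      rw [this]
      exact div_ne_zero hy0 hi
    · by_cases hkj : k = j
      · subst hkj
        simp only [if_true, if_neg hki, add_zero]
        have : 1 + (-s - y - x k) / x k = (-s - y) / x k := by field_simp; ring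
        rw [this]
        exact div_ne_zero hys hj
      · simp [hki, hkj]
  · simp only [add_mul, Finset.sum_add_distrib, ite_mul, zero_mul, one_mul,
      Finset.sum_ite_eq', Finset.mem_univ, if_true, Finset.sum_ite_eq]
    rw [div_mul_cancel₀ _ hi, div_mul_cancel₀ _ hj, hs]
    ring

theorem aux_prime (p : ℕ) (hp : p.Prime) (hodd : p ≠ 2) {l : ℕ} (x : Fin l → ℕ)
    (h2 : 2 ≤ {i : Fin l | Nat.Coprime (x i) p}.ncard) :
    ∃ a : Fin l → ℕ, (∀ k, Nat.Coprime (a k) p) ∧ p ∣ ∑ k, a k * x k := by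
  haveI := Fact.mk hp
  obtain ⟨i, hi, j, hj, hij⟩ := (Set.one_lt_ncard (Set.toFinite _)).1 h2
  have key : ∀ m : ℕ, Nat.Coprime m p ↔ (m : ZMod p) ≠ 0 := by
    intro m
    rw [Ne, ZMod.natCast_eq_zero_iff, Nat.coprime_comm, hp.coprime_iff_not_dvd]
  have h2' : (2 : ZMod p) ≠ 0 := by
    have := (key 2).1 ((Nat.coprime_primes Nat.prime_two hp).2 hodd.symm)
    simpa using this
  obtain ⟨a, ha, hs⟩ := aux_field h2' (fun k => (x k : ZMod p)) i j hij
    ((key _).1 hi) ((key _).1 hj)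
  refine ⟨fun k => (a k).val, fun k => (key _).2 (by simpa using ha k), ?_⟩
  rw [← ZMod.natCast_eq_zero_iff]
  push_cast
  simpa using hs

theorem aux_units (n : ℕ) (hodd : Odd n) (hsf : Squarefree n) {l : ℕ} (S : Fin l → ZMod n)
    (h2 : ∀ p : ℕ, p.Prime → p ∣ n → 2 ≤ {i : Fin l | Nat.Coprime ((S i).val) p}.ncard) :
    ∃ a : Fin l → ZMod n, (∀ k, IsUnit (a k)) ∧ ∑ k, a k * S k = 0 := by
  have hn : n ≠ 0 := hsf.ne_zero
  haveI : NeZero n := ⟨hn⟩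
  have h3 : ∀ p : ℕ, ∃ a : Fin l → ℕ, p.Prime → p ∣ n →
      ((∀ k, Nat.Coprime (a k) p) ∧ p ∣ ∑ k, a k * (S k).val) := by
    intro p
    by_cases h : p.Prime ∧ p ∣ n
    · obtain ⟨a, ha⟩ := aux_prime p h.1 (by
        rintro rfl
        exact (Nat.not_even_iff_odd.2 hodd) (even_iff_two_dvd.2 h.2)) _ (h2 p h.1 h.2)
      exact ⟨a, fun _ _ => ha⟩
    · exact ⟨0, fun h1 h2 => absurd ⟨h1, h2⟩ h⟩
  choose b hb using h3
  have hpp : Set.Pairwise (n.primeFactors : Set ℕ) (Function.onFun Nat.Coprime (fun p : ℕ => p)) := by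
    intro p hp q hq hpq
    exact (Nat.coprime_primes (Nat.prime_of_mem_primeFactors hp)
      (Nat.prime_of_mem_primeFactors hq)).2 hpq
  have hcr : ∀ k : Fin l, ∃ c : ℕ, ∀ p ∈ n.primeFactors, c ≡ b p k [MOD p] := fun k =>
    ⟨_, (Nat.chineseRemainderOfFinset (fun p => b p k) (fun p => p) n.primeFactors
      (fun p hp => (Nat.prime_of_mem_primeFactors hp).ne_zero) hpp).2⟩
  choose c hc using hcr
  refine ⟨fun k => (c k : ZMod n), fun k => ?_, ?_⟩
  · rw [ZMod.isUnit_iff_coprime]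
    apply Nat.Coprime.symm
    refine Nat.coprime_of_dvd fun p hp hpn hpc => ?_
    have h := (hb p hp hpn).1 k
    have h' := hc k p (Nat.mem_primeFactors.2 ⟨hp, hpn, hn⟩)
    have : p ∣ b p k := (h'.dvd_iff dvd_rfl).1 hpc
    exact (hp.coprime_iff_not_dvd.1 h.symm) this
  · have hd : n ∣ ∑ k, c k * (S k).val := by
      refine (Nat.prod_primeFactors_of_squarefree hsf).symm.dvd.trans ?_
      refine Finset.prod_primes_dvd _ (fun p hp => (Nat.prime_of_mem_primeFactors hp).prime) ?_
      intro p hp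
      have h := (hb p (Nat.prime_of_mem_primeFactors hp) (Nat.dvd_of_mem_primeFactors hp)).2
      rw [← ZMod.natCast_eq_zero_iff] at h ⊢
      rw [← h]
      push_cast
      refine Finset.sum_congr rfl fun k _ => ?_
      rw [(ZMod.natCast_eq_natCast_iff _ _ _).2 (hc k p hp)]
    rw [← ZMod.natCast_eq_zero_iff] at hd
    push_cast at hd
    simpa using hd

theorem aux_flip (n m p : ℕ) (hodd : Odd n) (hsf : Squarefree n) (hp : p.Prime)
    (hmn : m ∣ n) (hpm : p ∣ m) :
    ∃ u : ZMod n, IsUnit u ∧ jacobiSym (u.val : ℤ) m = -1 ∧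
      ∀ x : ZMod n, p ∣ x.val → u * x = x := by
  have hn : n ≠ 0 := hsf.ne_zero
  haveI : NeZero n := ⟨hn⟩
  haveI := Fact.mk hp
  obtain ⟨q, rfl⟩ := hpm
  obtain ⟨t, rfl⟩ := hmn
  have hp2 : ringChar (ZMod p) ≠ 2 := by
    rw [ZMod.ringChar_zmod_n]
    rintro rfl
    exact (Nat.not_even_iff_odd.2 hodd) (by rw [mul_assoc]; exact even_two_mul _)
  obtain ⟨r, hr⟩ := FiniteField.exists_nonsquare hp2
  have hcop : Nat.Coprime p (q * t) := by
    rw [mul_assoc] at hsf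
    exact Nat.coprime_of_squarefree_mul hsf
  obtain ⟨u, hu1, hu2⟩ := Nat.chineseRemainder hcop r.val 1
  have hur : (u : ZMod p) = r := by
    rw [(ZMod.natCast_eq_natCast_iff _ _ _).2 hu1]; simp
  have hr0 : r ≠ 0 := by rintro rfl; exact hr (IsSquare.zero)
  have hucop : Nat.Coprime u (p * (q * t)) := by
    refine Nat.Coprime.mul_right ?_ ?_
    · rw [Nat.coprime_comm, hp.coprime_iff_not_dvd, ← ZMod.natCast_eq_zero_iff, hur]
      exact hr0
    · have := hu2.gcd_eq
      simpa [Nat.Coprime] using this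
  refine ⟨(u : ZMod (p * q * t)), ?_, ?_, ?_⟩
  · rw [ZMod.isUnit_iff_coprime, mul_assoc]; exact hucop
  · have e : jacobiSym (((u : ZMod (p*q*t)).val : ℕ) : ℤ) (p * q) = jacobiSym (u : ℤ) (p * q) := by
      rw [jacobiSym.mod_left, jacobiSym.mod_left (u : ℤ), ZMod.val_natCast]
      congr 1
      push_cast
      exact Int.emod_emod_of_dvd _ ⟨(t : ℤ), by push_cast; ring⟩
    rw [e]
    haveI : NeZero q := ⟨by rintro rfl; simp at hn⟩
    rw [jacobiSym.mul_right, ← jacobiSym.legendreSym.to_jacobiSym]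
    have e1 : legendreSym p (u : ℤ) = -1 := by
      rw [legendreSym.eq_neg_one_iff]
      simpa [hur] using hr
    have e2 : jacobiSym (u : ℤ) q = 1 := by
      have : u ≡ 1 [MOD q] := hu2.of_mul_right t
      rw [jacobiSym.mod_left]
      have h' : (u : ℤ) % q = 1 % q := by exact_mod_cast this
      rw [h', ← jacobiSym.mod_left, jacobiSym.one_left]
    rw [e1, e2]; norm_num
  · intro x ⟨y, hy⟩
    have hx : x = ((p * y : ℕ) : ZMod (p * q * t)) := by rw [← hy]; simp
    rw [hx, ← Nat.cast_mul, ZMod.natCast_eq_natCast_iff]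
    have := (hu2.mul_right y).mul_left' p
    rw [← mul_assoc p q t] at this
    convert this using 1 <;> ring

theorem lset_zero_sum (n p' : ℕ) (hodd : Odd n) (hsf : Squarefree n)
    (hp' : p'.Prime) (hp'n : p' ∣ n)
    {l : ℕ} (S : Fin l → ZMod n)
    (h2 : ∀ p : ℕ, p.Prime → p ∣ n → 2 ≤ {i : Fin l | Nat.Coprime ((S i).val) p}.ncard)
    (h1 : {i : Fin l |
        IsUnit (ZMod.castHom (Nat.div_dvd_of_dvd hp'n) (ZMod (n / p')) (S i))}.ncard ≤ 1) :
    IsWZS (LSet n p') S := by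
  have hn : n ≠ 0 := hsf.ne_zero
  haveI : NeZero n := ⟨hn⟩
  have hmn : n / p' ∣ n := Nat.div_dvd_of_dvd hp'n
  have hmp : n = n / p' * p' := (Nat.div_mul_cancel hp'n).symm
  -- non-units modulo `n / p'` are divisible by a prime factor
  have hnon : ∀ i, ¬ IsUnit (ZMod.castHom (Nat.div_dvd_of_dvd hp'n) (ZMod (n / p')) (S i)) →
      ∃ p : ℕ, p.Prime ∧ p ∣ n / p' ∧ p ∣ (S i).val := by
    intro i hi
    have e : ZMod.castHom (Nat.div_dvd_of_dvd hp'n) (ZMod (n / p')) (S i)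
        = (((S i).val : ℕ) : ZMod (n / p')) := by
      rw [ZMod.castHom_apply, ZMod.natCast_val]
    rw [e, ZMod.isUnit_iff_coprime] at hi
    obtain ⟨p, hp, ha, hb⟩ := Nat.Prime.not_coprime_iff_dvd.1 hi
    exact ⟨p, hp, hb, ha⟩
  generalize hU : {i : Fin l |
    IsUnit (ZMod.castHom (Nat.div_dvd_of_dvd hp'n) (ZMod (n / p')) (S i))} = U at h1
  have hnon' : ∀ i, i ∉ U → ∃ p : ℕ, p.Prime ∧ p ∣ n / p' ∧ p ∣ (S i).val := by
    intro i hi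
    rw [← hU] at hi
    exact hnon i hi
  -- `n / p'` has a prime factor
  have hq : ∃ q : ℕ, q.Prime ∧ q ∣ n / p' := by
    have hl := h2 p' hp' hp'n
    obtain ⟨i, hi, j, hj, hij⟩ := (Set.one_lt_ncard (Set.toFinite _)).1 hl
    have : ¬ (i ∈ U ∧ j ∈ U) := fun h => hij ((Set.ncard_le_one (Set.toFinite _)).1 h1 i h.1 j h.2)
    rcases not_and_or.1 this with h | h
    · obtain ⟨p, hp, hpm, -⟩ := hnon' _ h
      exact ⟨p, hp, hpm⟩
    · obtain ⟨p, hp, hpm, -⟩ := hnon' _ h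
      exact ⟨p, hp, hpm⟩
  haveI : NeZero (n / p') := ⟨by intro h; rw [h] at hmp; simp at hmp; exact hn hmp⟩
  haveI : NeZero p' := ⟨hp'.ne_zero⟩
  have hχmul : ∀ a b : ZMod n, jacobiSym ((a * b).val : ℤ) (n / p')
      = jacobiSym (a.val : ℤ) (n / p') * jacobiSym (b.val : ℤ) (n / p') := by
    intro a b
    rw [← jacobiSym.mul_left, jacobiSym.mod_left, jacobiSym.mod_left (_ * _), ZMod.val_mul]
    congr 1
    push_cast
    exact Int.emod_emod_of_dvd _ (by exact_mod_cast hmn)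
  have hχ : ∀ a : ZMod n, IsUnit a → jacobiSym (a.val : ℤ) (n / p') = 1 ∨
      jacobiSym (a.val : ℤ) (n / p') = -1 := by
    intro a ha
    apply jacobiSym.eq_one_or_neg_one
    have h := (ZMod.isUnit_iff_coprime a.val n).1 (by simpa using ha)
    rw [Int.gcd_natCast_natCast]
    exact h.coprime_dvd_right hmn
  have hA : ∀ a : ZMod n, IsUnit a → jacobiSym (a.val : ℤ) (n / p') = 1 → a ∈ LSet n p' := by
    intro a ha h
    refine ⟨ha, ?_⟩
    have := jacobiSym.mul_right (a.val : ℤ) (n / p') p'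
    rw [h, one_mul, ← hmp] at this
    exact this
  -- weights good on `U`
  obtain ⟨a, ha, hs, haU⟩ : ∃ a : Fin l → ZMod n, (∀ k, IsUnit (a k)) ∧ ∑ k, a k * S k = 0 ∧
      ∀ k ∈ U, jacobiSym ((a k).val : ℤ) (n / p') = 1 := by
    obtain ⟨a, ha, hs⟩ := aux_units n hodd hsf S h2
    by_cases hg : ∀ k ∈ U, jacobiSym ((a k).val : ℤ) (n / p') = 1
    · exact ⟨a, ha, hs, hg⟩
    · push Not at hg
      obtain ⟨k, hk, hkχ⟩ := hg
      obtain ⟨q, hq, hqm⟩ := hq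
      obtain ⟨u, hu, huχ, -⟩ := aux_flip n (n / p') q hodd hsf hq hmn hqm
      refine ⟨fun i => u * a i, fun i => hu.mul (ha i), ?_, ?_⟩
      · simp only [mul_assoc]
        rw [← Finset.mul_sum, hs, mul_zero]
      · intro j hj
        rw [(Set.ncard_le_one (Set.toFinite _)).1 h1 j hj k hk, hχmul, huχ,
          (hχ _ (ha k)).resolve_left hkχ]
        norm_num
  have hfin : ∀ k, ∃ b : ZMod n, b ∈ LSet n p' ∧ b * S k = a k * S k := by
    intro k
    by_cases hg : jacobiSym ((a k).val : ℤ) (n / p') = 1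
    · exact ⟨a k, hA _ (ha k) hg, rfl⟩
    · obtain ⟨p, hp, hpm, hpS⟩ := hnon' k (fun h => hg (haU k h))
      obtain ⟨u, hu, huχ, hux⟩ := aux_flip n (n / p') p hodd hsf hp hmn hpm
      refine ⟨a k * u, hA _ ((ha k).mul hu) ?_, ?_⟩
      · rw [hχmul, huχ, (hχ _ (ha k)).resolve_left hg]
        norm_num
      · rw [mul_assoc, hux _ hpS]
  choose b hb hbs using hfin
  exact ⟨b, hb, by rw [Finset.sum_congr rfl fun k _ => hbs k, hs]⟩
end

section
/- Let n be odd and squarefree with every prime divisor of n at least 7 and Ω(n) ≠ 2, let p' be a prime divisor of n, and let A = L(n;p'). Then D_A(n) = Ω(n) + 1. -/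
open scoped BigOperators

theorem combU {ι : Type*} [DecidableEq ι] (P : Finset ℕ) (s : ℕ → Finset ι) :
    ∀ J : Finset ι, P.card < J.card → ∃ I ⊆ J, I.Nonempty ∧ ∀ p ∈ P, (I ∩ s p).card ≠ 1 := by
  induction P using Finset.strongInduction with
  | H P ih =>
    intro J hJ
    by_cases h : ∃ p ∈ P, (J ∩ s p).card = 1
    · obtain ⟨p, hp, h1⟩ := h
      obtain ⟨j, hj⟩ := Finset.card_eq_one.1 h1
      have hjJ : j ∈ J ∩ s p := by rw [hj]; simp
      have hjJ' := (Finset.mem_inter.1 hjJ).1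
      have c1 := Finset.card_erase_of_mem hp
      have c2 := Finset.card_erase_of_mem hjJ'
      have c3 := Finset.card_pos.2 ⟨p, hp⟩
      obtain ⟨I, hI, hne, hP⟩ := ih (P.erase p) (Finset.erase_ssubset hp) (J.erase j) (by omega)
      refine ⟨I, hI.trans (Finset.erase_subset _ _), hne, fun q hq => ?_⟩
      by_cases hqp : q = p
      · subst hqp
        have : I ∩ s q = ∅ := by
          ext i
          simp only [Finset.mem_inter, Finset.notMem_empty, iff_false, not_and]
          intro hi his
          have := hI hi
          have h2 : i ∈ J ∩ s q := Finset.mem_inter.2 ⟨(Finset.mem_erase.1 this).2, his⟩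
          rw [hj] at h2
          exact (Finset.mem_erase.1 this).1 (by simpa using h2)
        simp [this]
      · exact hP q (Finset.mem_erase.2 ⟨hqp, hq⟩)
    · push Not at h
      exact ⟨J, subset_rfl, Finset.card_pos.1 (by omega), h⟩

theorem removeOne {ι : Type*} [DecidableEq ι] (J s : Finset ι) (hJ : J.Nonempty) (h : (J ∩ s).card ≤ 1) :
    ∃ J' ⊆ J, J'.card + 1 = J.card ∧ J' ∩ s = ∅ := by
  by_cases h0 : J ∩ s = ∅
  · obtain ⟨j, hj⟩ := hJ
    refine ⟨J.erase j, Finset.erase_subset _ _, Finset.card_erase_add_one hj, ?_⟩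
    rw [← Finset.subset_empty, ← h0]
    exact Finset.inter_subset_inter_right (Finset.erase_subset _ _)
  · have : (J ∩ s).card ≠ 0 := by simpa using h0
    obtain ⟨j, hj⟩ := Finset.card_eq_one.1 (by omega : (J ∩ s).card = 1)
    have hjm : j ∈ J ∩ s := by rw [hj]; simp
    refine ⟨J.erase j, Finset.erase_subset _ _, Finset.card_erase_add_one (Finset.mem_inter.1 hjm).1, ?_⟩
    rw [Finset.erase_inter, hj]; simp

/-- the combinatorial core -/
theorem combMain {ι : Type*} [DecidableEq ι] (Q : Finset ℕ) (p' : ℕ) (hp' : p' ∉ Q)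
    (hQ : 2 ≤ Q.card) (s : ℕ → Finset ι) (J : Finset ι) (hJ : J.card = Q.card + 2) :
    ∃ I, I.Nonempty ∧ (∀ p ∈ insert p' Q, (I ∩ s p).card ≠ 1) ∧
      ∃ q ∈ Q, (I ∩ s q).card ≠ 2 ∨ ∃ r ∈ Q, (I ∩ s r).card = 2 ∧ I ∩ s r ≠ I ∩ s q := by
  -- dropping to the unit case
  have drop : ∀ (R : Finset ℕ), Q ⊆ R → ∀ (K : Finset ι), R.card < K.card →
      (∃ q ∈ Q, (K ∩ s q).card ≤ 1) → ∃ I ⊆ K, I.Nonempty ∧ (∀ p ∈ R, (I ∩ s p).card ≠ 1) ∧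
      ∃ q ∈ Q, (I ∩ s q).card ≠ 2 := by
    rintro R hR K hK ⟨q, hq, hq1⟩
    obtain ⟨K', hK', hc, he⟩ := removeOne K (s q) (Finset.card_pos.1 (by omega)) hq1
    have := Finset.card_erase_add_one (hR hq)
    obtain ⟨I, hI, hne, h⟩ := combU (R.erase q) s K' (by omega)
    have h0 : I ∩ s q = ∅ := by
      rw [← Finset.subset_empty, ← he]
      exact Finset.inter_subset_inter_right hI
    refine ⟨I, hI.trans hK', hne, fun p hp => ?_, q, hq, by simp [h0]⟩
    by_cases hpq : p = q
    · subst hpq; simp [h0]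
    · exact h p (Finset.mem_erase.2 ⟨hpq, hp⟩)
  have same : ∀ K : Finset ι, (∀ q ∈ Q, (K ∩ s q).card = 2 ∧ ∀ r ∈ Q, (K ∩ s r).card = 2 → K ∩ s r = K ∩ s q) →
      ∃ K' ⊆ K, K'.card + 2 = K.card ∧ ∀ q ∈ Q, K' ∩ s q = ∅ := by
    intro K h
    obtain ⟨q0, hq0⟩ : Q.Nonempty := Finset.card_pos.1 (by omega)
    refine ⟨K \ (K ∩ s q0), Finset.sdiff_subset, ?_, fun q hq => ?_⟩
    · have := Finset.card_sdiff_add_card_eq_card (Finset.inter_subset_left : K ∩ s q0 ⊆ K)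
      have := (h q0 hq0).1
      omega
    · rw [← (h q0 hq0).2 q hq (h q hq).1]
      ext i; simp
  by_cases h1 : ∃ q ∈ Q, (J ∩ s q).card ≤ 1
  · obtain ⟨I, -, hne, h, q, hq, h2⟩ := drop (insert p' Q) (Finset.subset_insert _ _) J
      (by rw [Finset.card_insert_of_notMem hp']; omega) h1
    exact ⟨I, hne, h, q, hq, Or.inl h2⟩
  by_cases h2 : (J ∩ s p').card ≤ 1
  · obtain ⟨K, hK, hc, he⟩ := removeOne J (s p') (Finset.card_pos.1 (by omega)) h2
    have hp0 : ∀ I ⊆ K, I ∩ s p' = ∅ := fun I hI => by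
      rw [← Finset.subset_empty, ← he]
      exact Finset.inter_subset_inter_right hI
    by_cases h3 : ∃ q ∈ Q, (K ∩ s q).card ≤ 1
    · obtain ⟨I, hI, hne, h, q, hq, h2⟩ := drop Q subset_rfl K (by omega) h3
      refine ⟨I, hne, ?_, q, hq, Or.inl h2⟩
      intro p hp
      rcases Finset.mem_insert.1 hp with rfl | hp
      · simp [hp0 I hI]
      · exact h p hp
    · push Not at h3
      by_cases h4 : ∃ q ∈ Q, (K ∩ s q).card ≠ 2 ∨ ∃ r ∈ Q, (K ∩ s r).card = 2 ∧ K ∩ s r ≠ K ∩ s q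
      · refine ⟨K, Finset.card_pos.1 (by omega), ?_, h4⟩
        intro p hp
        rcases Finset.mem_insert.1 hp with rfl | hp
        · simp [hp0 K subset_rfl]
        · have := h3 p hp; omega
      · push Not at h4
        obtain ⟨I, hI, hIc, h0⟩ := same K h4
        obtain ⟨q0, hq0⟩ : Q.Nonempty := Finset.card_pos.1 (by omega)
        refine ⟨I, Finset.card_pos.1 (by omega), ?_, q0, hq0, Or.inl (by simp [h0 q0 hq0])⟩
        intro p hp
        rcases Finset.mem_insert.1 hp with rfl | hp
        · simp [hp0 I hI]
        · simp [h0 p hp]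
  · push Not at h1
    by_cases h4 : ∃ q ∈ Q, (J ∩ s q).card ≠ 2 ∨ ∃ r ∈ Q, (J ∩ s r).card = 2 ∧ J ∩ s r ≠ J ∩ s q
    · refine ⟨J, Finset.card_pos.1 (by omega), ?_, h4⟩
      intro p hp
      rcases Finset.mem_insert.1 hp with rfl | hp
      · omega
      · have := h1 p hp; omega
    · push Not at h4
      obtain ⟨K, hK, hKc, h0⟩ := same J h4
      obtain ⟨q0, hq0⟩ : Q.Nonempty := Finset.card_pos.1 (by omega)
      obtain ⟨I, hI, hne, h⟩ := combU {p'} s K (by simp; omega)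
      have h0' : ∀ q ∈ Q, I ∩ s q = ∅ := fun q hq => by
        rw [← Finset.subset_empty, ← h0 q hq]
        exact Finset.inter_subset_inter_right hI
      refine ⟨I, hne, ?_, q0, hq0, Or.inl (by simp [h0' q0 hq0])⟩
      intro p hp
      rcases Finset.mem_insert.1 hp with rfl | hp
      · exact h p (by simp)
      · simp [h0' p hp]

theorem two_sum (p : ℕ) [Fact p.Prime] (hp : 7 ≤ p) (e d : ℤ) (he : IsUnit e) (hd : IsUnit d)
    (s : ZMod p) (hs : s ≠ 0) :
    ∃ u v : ZMod p, quadraticChar (ZMod p) u = e ∧ quadraticChar (ZMod p) v = d ∧ u + v = s := by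
  classical
  set χ := quadraticChar (ZMod p) with hχ
  have h2 : ringChar (ZMod p) ≠ 2 := by rw [ZMod.ringChar_zmod_n]; omega
  have hχ1 : χ ≠ 1 := quadraticChar_ne_one h2
  -- the normalized version
  have key : ∀ e d : ℤ, IsUnit e → IsUnit d → ∃ t : ZMod p, χ t = e ∧ χ (1 - t) = d := by
    intro e d he hd
    by_contra hno
    push Not at hno
    have hJ : ∑ t, χ t * χ (1 - t) = - χ (-1) := by
      have := jacobiSum_nontrivial_inv hχ1
      rwa [(quadraticChar_isQuadratic (ZMod p)).inv] at this
    have hs1 : ∑ t, χ t = 0 := MulChar.sum_eq_zero_of_ne_one hχ1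
    have hs2 : ∑ t, χ (1 - t) = 0 := by
      rw [← hs1]
      exact Fintype.sum_equiv (Equiv.subLeft 1) _ _ (fun t => rfl)
    have hsum : ∑ t, (1 + e * χ t) * (1 + d * χ (1 - t)) = p - e * d * χ (-1) := by
      have : ∀ t : ZMod p, (1 + e * χ t) * (1 + d * χ (1 - t)) =
        1 + e * χ t + d * χ (1 - t) + e * d * (χ t * χ (1 - t)) := fun t => by ring
      simp only [this, Finset.sum_add_distrib, ← Finset.mul_sum, hs1, hs2, hJ]
      simp [ZMod.card]
      ring
    have hle : ∑ t, (1 + e * χ t) * (1 + d * χ (1 - t)) ≤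
        ∑ t ∈ ({0, 1} : Finset (ZMod p)), (2 : ℤ) := by
      rw [← Finset.sum_subset (Finset.subset_univ ({0, 1} : Finset (ZMod p)))]
      · apply Finset.sum_le_sum
        intro t ht
        have hz : χ 0 = 0 := MulChar.map_zero χ
        simp only [Finset.mem_insert, Finset.mem_singleton] at ht
        rcases Int.isUnit_iff.1 he with rfl | rfl <;> rcases Int.isUnit_iff.1 hd with rfl | rfl <;>
        rcases ht with rfl | rfl <;> simp [hz]
      · intro t _ ht
        simp only [Finset.mem_insert, Finset.mem_singleton, not_or] at ht
        have ht' : 1 - t ≠ 0 := fun h => ht.2 (by linear_combination -h)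
        have a1 := quadraticChar_dichotomy ht.1
        have a2 := quadraticChar_dichotomy ht'
        have a3 := hno t
        rw [← hχ] at a1 a2
        rcases Int.isUnit_iff.1 he with rfl | rfl <;> rcases Int.isUnit_iff.1 hd with rfl | rfl <;>
        rcases a1 with a1 | a1 <;> rcases a2 with a2 | a2 <;> simp_all
    have hc : ∑ t ∈ ({0, 1} : Finset (ZMod p)), (2 : ℤ) ≤ 4 := by
      rw [Finset.sum_const, nsmul_eq_mul]
      have := Finset.card_le_two (a := (0 : ZMod p)) (b := 1)
      omega
    have a1 := quadraticChar_dichotomy (F := ZMod p) (a := -1) (by simp)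
    rw [← hχ] at a1
    rw [hsum] at hle
    rcases Int.isUnit_iff.1 he with rfl | rfl <;> rcases Int.isUnit_iff.1 hd with rfl | rfl <;>
      rcases a1 with a1 | a1 <;> rw [a1] at hle <;> omega
  have hsd := quadraticChar_dichotomy hs
  rw [← hχ] at hsd
  have hsu : IsUnit (χ s) := Int.isUnit_iff.2 hsd
  have hss : χ s * χ s = 1 := by rcases hsd with h | h <;> simp [h]
  obtain ⟨t, h1, h2⟩ := key (χ s * e) (χ s * d) (hsu.mul he) (hsu.mul hd)
  refine ⟨s * t, s * (1 - t), ?_, ?_, by ring⟩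
  · rw [map_mul, h1, ← mul_assoc, hss, one_mul]
  · rw [map_mul, h2, ← mul_assoc, hss, one_mul]

theorem exists_sign (p : ℕ) [Fact p.Prime] (hp : 7 ≤ p) (e : ℤ) (he : IsUnit e) :
    ∃ u : ZMod p, quadraticChar (ZMod p) u = e := by
  obtain ⟨u, v, h, _⟩ := two_sum p hp e e he he 1 one_ne_zero
  exact ⟨u, h⟩

theorem ne_zero_of_sign {p : ℕ} [Fact p.Prime] {e : ℤ} (he : IsUnit e) {u : ZMod p}
    (h : quadraticChar (ZMod p) u = e) : u ≠ 0 := by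
  rintro rfl
  rw [MulChar.map_zero] at h
  subst h
  simp at he

theorem local_free {ι : Type*} [DecidableEq ι] (p : ℕ) [Fact p.Prime] (hp : 7 ≤ p) (I : Finset ι)
    (x : ι → ZMod p) (h1 : (I.filter (fun i => x i ≠ 0)).card ≠ 1)
    (h2 : (I.filter (fun i => x i ≠ 0)).card ≠ 2) (e : ι → ℤ) (he : ∀ i, IsUnit (e i)) :
    ∃ w : ι → ZMod p, (∀ i, quadraticChar (ZMod p) (w i) = e i) ∧ ∑ i ∈ I, w i * x i = 0 := by
  choose w0 hw0 using fun i => exists_sign p hp (e i) (he i)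
  by_cases h0 : (I.filter (fun i => x i ≠ 0)).card = 0
  · refine ⟨w0, hw0, Finset.sum_eq_zero fun i hi => ?_⟩
    rw [Finset.card_eq_zero, Finset.filter_eq_empty_iff] at h0
    have := h0 hi
    push Not at this
    rw [this, mul_zero]
  obtain ⟨a, b, c, ha, hb, hc, hab, hac, hbc⟩ := Finset.two_lt_card_iff.1
    (by omega : 2 < (I.filter (fun i => x i ≠ 0)).card)
  rw [Finset.mem_filter] at ha hb hc
  have split : ∀ f : ι → ZMod p, ∑ i ∈ I, f i = f a + (f b + (f c +
      ∑ i ∈ ((I.erase a).erase b).erase c, f i)) := by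
    intro f
    rw [Finset.add_sum_erase _ f (Finset.mem_erase.2 ⟨hbc.symm, Finset.mem_erase.2 ⟨hac.symm, hc.1⟩⟩),
      Finset.add_sum_erase _ f (Finset.mem_erase.2 ⟨hab.symm, hb.1⟩), Finset.add_sum_erase _ f ha.1]
  set s := ∑ i ∈ ((I.erase a).erase b).erase c, w0 i * x i with hs
  have hn : ∀ k : ℕ, 0 < k → k < 7 → (k : ZMod p) ≠ 0 := by
    intro k hk hk7 h
    rw [ZMod.natCast_eq_zero_iff] at h
    have := Nat.le_of_dvd hk h
    omega
  obtain ⟨z, hz, hzs⟩ : ∃ z, quadraticChar (ZMod p) z = e c ∧ z * x c + s ≠ 0 := by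
    by_cases h : w0 c * x c + s = 0
    · refine ⟨2 * 2 * w0 c, ?_, fun h' => ?_⟩
      · have h2 : (2 : ZMod p) ≠ 0 := by exact_mod_cast hn 2 (by norm_num) (by norm_num)
        rw [map_mul, hw0, map_mul, ← pow_two, quadraticChar_sq_one h2, one_mul]
      · have h3 : (3 : ZMod p) * (w0 c * x c) = 0 := by linear_combination h' - h
        have h4 : (3 : ZMod p) ≠ 0 := by exact_mod_cast hn 3 (by norm_num) (by norm_num)
        exact mul_ne_zero h4 (mul_ne_zero (ne_zero_of_sign (he c) (hw0 c)) hc.2) h3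
    · exact ⟨w0 c, hw0 c, h⟩
  have ux : ∀ i, x i ≠ 0 → IsUnit (quadraticChar (ZMod p) (x i)) :=
    fun i hi => Int.isUnit_iff.2 (quadraticChar_dichotomy hi)
  obtain ⟨u, v, hu, hv, huv⟩ := two_sum p hp _ _ ((he a).mul (ux a ha.2)) ((he b).mul (ux b hb.2))
    (-(z * x c + s)) (neg_ne_zero.2 hzs)
  have dv : ∀ i (_ : x i ≠ 0) u, quadraticChar (ZMod p) u = e i * quadraticChar (ZMod p) (x i) →
      quadraticChar (ZMod p) (u / x i) = e i := by
    intro i hi u hu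
    apply mul_right_cancel₀ (ux i hi).ne_zero
    rw [← map_mul, div_mul_cancel₀ _ hi, hu]
  refine ⟨fun i => if i = a then u / x a else if i = b then v / x b else if i = c then z else w0 i,
    fun i => ?_, ?_⟩
  · dsimp only
    split_ifs with h h h
    · rw [h]; exact dv a ha.2 u hu
    · rw [h]; exact dv b hb.2 v hv
    · rw [h]; exact hz
    · exact hw0 i
  · rw [split]
    have : ∑ i ∈ ((I.erase a).erase b).erase c, (if i = a then u / x a else if i = b then v / x b
        else if i = c then z else w0 i) * x i = s := by
      rw [hs]
      apply Finset.sum_congr rfl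
      intro i hi
      simp only [Finset.mem_erase] at hi
      simp [hi.1, hi.2.1, hi.2.2.1]
    rw [this]
    simp only [if_true, if_neg hab.symm, if_neg hac.symm, if_neg hbc.symm]
    rw [div_mul_cancel₀ _ ha.2, div_mul_cancel₀ _ hb.2]
    linear_combination huv

theorem local_two {ι : Type*} [DecidableEq ι] (p : ℕ) [Fact p.Prime] (hp : 7 ≤ p) (I : Finset ι)
    (x : ι → ZMod p) (h2 : (I.filter (fun i => x i ≠ 0)).card = 2) (e : ι → ℤ)
    (he : ∀ i, IsUnit (e i)) (c : ι) (hc : c ∈ I.filter (fun i => x i ≠ 0)) :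
    ∃ w : ι → ZMod p, (∀ i, w i ≠ 0) ∧ (∀ i, i ≠ c → quadraticChar (ZMod p) (w i) = e i) ∧
      ∑ i ∈ I, w i * x i = 0 := by
  choose w0 hw0 using fun i => exists_sign p hp (e i) (he i)
  have h3 := Finset.card_erase_of_mem hc
  rw [h2] at h3
  obtain ⟨d, hd⟩ := Finset.card_eq_one.1 h3
  have hdm : d ∈ (I.filter (fun i => x i ≠ 0)).erase c := by rw [hd]; simp
  have hdc := (Finset.mem_erase.1 hdm).1
  have hd0 := (Finset.mem_filter.1 (Finset.mem_erase.1 hdm).2).2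
  have hc0 := (Finset.mem_filter.1 hc).2
  have hw0' : ∀ i, w0 i ≠ 0 := fun i => ne_zero_of_sign (he i) (hw0 i)
  refine ⟨Function.update w0 c (-(w0 d * x d) / x c), fun i => ?_, fun i hi => ?_, ?_⟩
  · by_cases hi : i = c
    · subst hi
      simp [hw0', hc0, hd0]
    · simp [hi, hw0']
  · simp [hi, hw0]
  · have : ∑ i ∈ I.filter (fun i => x i ≠ 0), Function.update w0 c (-(w0 d * x d) / x c) i * x i
        = ∑ i ∈ I, Function.update w0 c (-(w0 d * x d) / x c) i * x i := by
      apply Finset.sum_filter_of_ne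
      intro i _ h h0
      exact h (by rw [h0, mul_zero])
    rw [← this, ← Finset.add_sum_erase _ _ hc, hd]
    simp [hdc, div_mul_cancel₀ _ hc0]

theorem local_any {ι : Type*} [DecidableEq ι] (p : ℕ) [Fact p.Prime] (hp : 7 ≤ p) (I : Finset ι)
    (x : ι → ZMod p) (h1 : (I.filter (fun i => x i ≠ 0)).card ≠ 1) :
    ∃ w : ι → ZMod p, (∀ i, w i ≠ 0) ∧ ∑ i ∈ I, w i * x i = 0 := by
  by_cases h2 : (I.filter (fun i => x i ≠ 0)).card = 2
  · obtain ⟨c, hc⟩ : (I.filter (fun i => x i ≠ 0)).Nonempty := Finset.card_pos.1 (by omega)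
    obtain ⟨w, h, -, h'⟩ := local_two p hp I x h2 (fun _ => 1) (fun _ => isUnit_one) c hc
    exact ⟨w, h, h'⟩
  · obtain ⟨w, h, h'⟩ := local_free p hp I x h1 h2 (fun _ => 1) (fun _ => isUnit_one)
    exact ⟨w, fun i => ne_zero_of_sign isUnit_one (h i), h'⟩

theorem jac_val (p : ℕ) [Fact p.Prime] (u : ZMod p) :
    jacobiSym (u.val : ℤ) p = quadraticChar (ZMod p) u := by
  rw [← jacobiSym.legendreSym.to_jacobiSym, legendreSym]
  simp

theorem sum_val (p : ℕ) [Fact p.Prime] {ι : Type*} (I : Finset ι) (w : ι → ZMod p) (x : ι → ℕ)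
    (h : ∑ i ∈ I, w i * (x i : ZMod p) = 0) : p ∣ ∑ i ∈ I, (w i).val * x i := by
  rw [← ZMod.natCast_eq_zero_iff]
  push_cast
  simpa using h

theorem filter_conv (p : ℕ) {ι : Type*} (I : Finset ι) (x : ι → ℕ) :
    I.filter (fun i => (x i : ZMod p) ≠ 0) = I.filter (fun i => ¬ p ∣ x i) := by
  apply Finset.filter_congr
  intro i _
  rw [Ne, ZMod.natCast_eq_zero_iff]

theorem nloc_free {ι : Type*} [DecidableEq ι] (p : ℕ) (hpp : p.Prime) (hp : 7 ≤ p) (I : Finset ι)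
    (x : ι → ℕ) (h1 : (I.filter (fun i => ¬ p ∣ x i)).card ≠ 1)
    (h2 : (I.filter (fun i => ¬ p ∣ x i)).card ≠ 2) (e : ι → ℤ) (he : ∀ i, IsUnit (e i)) :
    ∃ w : ι → ℕ, (∀ i, jacobiSym (w i) p = e i) ∧ p ∣ ∑ i ∈ I, w i * x i := by
  haveI := Fact.mk hpp
  rw [← filter_conv] at h1 h2
  obtain ⟨w, h, h'⟩ := local_free p hp I (fun i => (x i : ZMod p)) h1 h2 e he
  exact ⟨fun i => (w i).val, fun i => by rw [jac_val, h], sum_val p I w x h'⟩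

theorem isUnit_jac (p : ℕ) [Fact p.Prime] (u : ZMod p) (hu : u ≠ 0) :
    IsUnit (jacobiSym (u.val : ℤ) p) := by
  rw [jac_val]
  exact Int.isUnit_iff.2 (quadraticChar_dichotomy hu)

theorem nloc_two {ι : Type*} [DecidableEq ι] (p : ℕ) (hpp : p.Prime) (hp : 7 ≤ p) (I : Finset ι)
    (x : ι → ℕ) (h2 : (I.filter (fun i => ¬ p ∣ x i)).card = 2) (e : ι → ℤ)
    (he : ∀ i, IsUnit (e i)) (c : ι) (hc : c ∈ I.filter (fun i => ¬ p ∣ x i)) :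
    ∃ w : ι → ℕ, (∀ i, IsUnit (jacobiSym (w i) p)) ∧ (∀ i, i ≠ c → jacobiSym (w i) p = e i) ∧
      p ∣ ∑ i ∈ I, w i * x i := by
  haveI := Fact.mk hpp
  rw [← filter_conv] at h2 hc
  obtain ⟨w, h0, h, h'⟩ := local_two p hp I (fun i => (x i : ZMod p)) h2 e he c hc
  exact ⟨fun i => (w i).val, fun i => isUnit_jac p _ (h0 i), fun i hi => by rw [jac_val, h i hi],
    sum_val p I w x h'⟩

theorem nloc_any {ι : Type*} [DecidableEq ι] (p : ℕ) (hpp : p.Prime) (hp : 7 ≤ p) (I : Finset ι)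
    (x : ι → ℕ) (h1 : (I.filter (fun i => ¬ p ∣ x i)).card ≠ 1) :
    ∃ w : ι → ℕ, (∀ i, IsUnit (jacobiSym (w i) p)) ∧ p ∣ ∑ i ∈ I, w i * x i := by
  haveI := Fact.mk hpp
  rw [← filter_conv] at h1
  obtain ⟨w, h0, h'⟩ := local_any p hp I (fun i => (x i : ZMod p)) h1
  exact ⟨fun i => (w i).val, fun i => isUnit_jac p _ (h0 i), sum_val p I w x h'⟩

theorem nsign (p : ℕ) (hpp : p.Prime) (hp : 7 ≤ p) (e : ℤ) (he : IsUnit e) :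
    ∃ u : ℕ, jacobiSym u p = e := by
  haveI := Fact.mk hpp
  obtain ⟨u, hu⟩ := exists_sign p hp e he
  exact ⟨u.val, by rw [jac_val, hu]⟩

/-- Choice of local weights with the sign condition. -/
theorem choose_weights {ι : Type*} [DecidableEq ι] (P Q : Finset ℕ) (hQP : Q ⊆ P)
    (hP : ∀ p ∈ P, p.Prime ∧ 7 ≤ p)
    (I : Finset ι) (x : ι → ℕ)
    (h1 : ∀ p ∈ P, (I.filter (fun i => ¬ p ∣ x i)).card ≠ 1)
    (h2 : ∃ q ∈ Q, (I.filter (fun i => ¬ q ∣ x i)).card ≠ 2 ∨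
      ∃ r ∈ Q, (I.filter (fun i => ¬ r ∣ x i)).card = 2 ∧
        I.filter (fun i => ¬ r ∣ x i) ≠ I.filter (fun i => ¬ q ∣ x i)) :
    ∃ w : ℕ → ι → ℕ, (∀ p ∈ P, ∀ i, IsUnit (jacobiSym (w p i) p)) ∧
      (∀ p ∈ P, p ∣ ∑ i ∈ I, w p i * x i) ∧ ∀ i, ∏ p ∈ Q, jacobiSym (w p i) p = 1 := by
  have base : ∀ p, ∃ w : ι → ℕ, p ∈ P → (∀ i, IsUnit (jacobiSym (w i) p)) ∧
      p ∣ ∑ i ∈ I, w i * x i := by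
    intro p
    by_cases hp : p ∈ P
    · obtain ⟨w, hw⟩ := nloc_any p (hP p hp).1 (hP p hp).2 I x (h1 p hp)
      exact ⟨w, fun _ => hw⟩
    · exact ⟨fun _ => 0, fun h => absurd h hp⟩
  choose w0 hw0 using base
  have upr : ∀ (w : ℕ → ι → ℕ), (∀ p ∈ P, ∀ i, IsUnit (jacobiSym (w p i) p)) → ∀ R ⊆ P, ∀ i,
      IsUnit (∏ p ∈ R, jacobiSym (w p i) p) := by
    intro w hw R hR i
    exact Finset.prod_induction _ IsUnit (fun _ _ => IsUnit.mul) isUnit_one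
      (fun p hp => hw p (hR hp) i)
  have sq : ∀ z : ℤ, IsUnit z → z * z = 1 := fun z hz => by
    rcases Int.isUnit_iff.1 hz with rfl | rfl <;> norm_num
  have upd : ∀ (w : ℕ → ι → ℕ) (q : ℕ) (v : ι → ℕ),
      (∀ p ∈ P, ∀ i, IsUnit (jacobiSym (w p i) p)) → (∀ p ∈ P, p ∣ ∑ i ∈ I, w p i * x i) →
      (∀ i, IsUnit (jacobiSym (v i) q)) → (q ∣ ∑ i ∈ I, v i * x i) →
      (∀ p ∈ P, ∀ i, IsUnit (jacobiSym (Function.update w q v p i) p)) ∧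
      (∀ p ∈ P, p ∣ ∑ i ∈ I, Function.update w q v p i * x i) := by
    intro w q v a1 a2 a3 a4
    constructor
    · intro p hp i
      by_cases h : p = q
      · subst h; simpa using a3 i
      · simpa [h] using a1 p hp i
    · intro p hp
      by_cases h : p = q
      · subst h; simpa using a4
      · simpa [h] using a2 p hp
  have updp : ∀ (w : ℕ → ι → ℕ) (q : ℕ) (v : ι → ℕ), q ∈ Q → ∀ i,
      ∏ p ∈ Q, jacobiSym (Function.update w q v p i) p =
        jacobiSym (v i) q * ∏ p ∈ Q.erase q, jacobiSym (w p i) p := by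
    intro w q v hq i
    rw [← Finset.mul_prod_erase _ _ hq, Function.update_self]
    congr 1
    apply Finset.prod_congr rfl
    intro p hp
    rw [Function.update_of_ne (Finset.mem_erase.1 hp).1]
  have hw0u : ∀ p ∈ P, ∀ i, IsUnit (jacobiSym (w0 p i) p) := fun p hp => (hw0 p hp).1
  have hw0s : ∀ p ∈ P, p ∣ ∑ i ∈ I, w0 p i * x i := fun p hp => (hw0 p hp).2
  obtain ⟨q, hq, hor⟩ := h2
  have hqP := hQP hq
  have hQe : ∀ q, Q.erase q ⊆ P := fun q => (Finset.erase_subset _ _).trans hQP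
  by_cases hq2 : (I.filter (fun i => ¬ q ∣ x i)).card ≠ 2
  · obtain ⟨v, hv, hvs⟩ := nloc_free q (hP q hqP).1 (hP q hqP).2 I x (h1 q hqP) hq2
      (fun i => ∏ p ∈ Q.erase q, jacobiSym (w0 p i) p) (upr w0 hw0u _ (hQe q))
    obtain ⟨b1, b2⟩ := upd w0 q v hw0u hw0s
      (fun i => by rw [hv i]; exact upr w0 hw0u _ (hQe q) i) hvs
    refine ⟨_, b1, b2, fun i => ?_⟩
    rw [updp _ _ _ hq, hv i]
    exact sq _ (upr w0 hw0u _ (hQe q) i)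
  · obtain ⟨r, hr, hr2, hne⟩ := hor.resolve_left hq2
    push Not at hq2
    have hrP := hQP hr
    obtain ⟨c, hcq, hcr⟩ : ∃ c ∈ I.filter (fun i => ¬ q ∣ x i), c ∉ I.filter (fun i => ¬ r ∣ x i) := by
      by_contra hcon
      push Not at hcon
      exact hne (Finset.eq_of_subset_of_card_le hcon (by omega)).symm
    obtain ⟨v, hvu, hv, hvs⟩ := nloc_two q (hP q hqP).1 (hP q hqP).2 I x hq2
      (fun i => ∏ p ∈ Q.erase q, jacobiSym (w0 p i) p) (upr w0 hw0u _ (hQe q)) c hcq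
    obtain ⟨b1, b2⟩ := upd w0 q v hw0u hw0s hvu hvs
    set w1 := Function.update w0 q v with hw1
    have hw1p : ∀ i, i ≠ c → ∏ p ∈ Q, jacobiSym (w1 p i) p = 1 := fun i hi => by
      rw [updp _ _ _ hq, hv i hi]
      exact sq _ (upr w0 hw0u _ (hQe q) i)
    obtain ⟨u, hu⟩ := nsign r (hP r hrP).1 (hP r hrP).2 _ (upr w1 b1 _ (hQe r) c)
    have hcI := (Finset.mem_filter.1 hcq).1
    have hrc : r ∣ x c := by
      by_contra h
      exact hcr (Finset.mem_filter.2 ⟨hcI, h⟩)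
    obtain ⟨c1, c2⟩ := upd w1 r (Function.update (w1 r) c u) b1 b2
      (fun i => by
        by_cases h : i = c
        · subst h
          rw [Function.update_self, hu]
          exact upr w1 b1 _ (hQe r) i
        · rw [Function.update_of_ne h]
          exact b1 r hrP i)
      (by
        have e1 := b2 r hrP
        rw [← Finset.add_sum_erase _ _ hcI] at e1 ⊢
        rw [Function.update_self]
        have e2 : ∑ i ∈ I.erase c, Function.update (w1 r) c u i * x i
            = ∑ i ∈ I.erase c, w1 r i * x i := by
          apply Finset.sum_congr rfl
          intro i hi
          rw [Function.update_of_ne (Finset.mem_erase.1 hi).1]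
        rw [e2]
        exact dvd_add (hrc.mul_left _) ((Nat.dvd_add_right (hrc.mul_left _)).1 e1))
    refine ⟨_, c1, c2, fun i => ?_⟩
    rw [updp _ _ _ hr]
    by_cases h : i = c
    · subst h
      rw [Function.update_self, hu]
      exact sq _ (upr w1 b1 _ (hQe r) i)
    · rw [Function.update_of_ne h, Finset.mul_prod_erase Q (fun p => jacobiSym (w1 p i) p) hr]
      exact hw1p i h

theorem jac_prod (n : ℕ) (hn : n ≠ 0) (hsf : Squarefree n) (a : ℤ) :
    jacobiSym a n = ∏ p ∈ n.primeFactors, jacobiSym a p := by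
  have : ∀ s : Finset ℕ, (∀ p ∈ s, p ≠ 0) → jacobiSym a (∏ p ∈ s, p) = ∏ p ∈ s, jacobiSym a p := by
    intro s
    induction s using Finset.induction_on with
    | empty => simp
    | insert p s hp ih =>
      intro h
      have h0 : ∏ p ∈ s, p ≠ 0 :=
        Finset.prod_ne_zero_iff.2 fun q hq => h q (Finset.mem_insert_of_mem hq)
      rw [Finset.prod_insert hp, Finset.prod_insert hp,
        jacobiSym.mul_right' a (h p (by simp)) h0,
        ih (fun q hq => h q (Finset.mem_insert_of_mem hq))]
  have h := this n.primeFactors (fun p hp => (Nat.prime_of_mem_primeFactors hp).ne_zero)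
  rwa [Nat.prod_primeFactors_of_squarefree hsf] at h

theorem finish (n p' : ℕ) (hn : n ≠ 0) (hsf : Squarefree n) (hp' : p' ∈ n.primeFactors)
    {l : ℕ} (S : Fin l → ZMod n) (I : Finset (Fin l)) (hI : I.Nonempty) (w : ℕ → Fin l → ℕ)
    (hu : ∀ p ∈ n.primeFactors, ∀ i, IsUnit (jacobiSym (w p i) p))
    (hs : ∀ p ∈ n.primeFactors, p ∣ ∑ i ∈ I, w p i * (S i).val)
    (hpr : ∀ i, ∏ p ∈ n.primeFactors.erase p', jacobiSym (w p i) p = 1) :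
    HasWZSSub (LSet n p') S := by
  haveI : NeZero n := ⟨hn⟩
  have crt : ∀ i, ∃ a : ℕ, ∀ p ∈ n.primeFactors, a ≡ w p i [MOD p] := fun i =>
    ⟨_, (Nat.chineseRemainderOfFinset (fun p => w p i) id n.primeFactors
      (fun p hp => (Nat.prime_of_mem_primeFactors hp).ne_zero)
      (fun p hp q hq hpq => (Nat.coprime_primes (Nat.prime_of_mem_primeFactors hp)
        (Nat.prime_of_mem_primeFactors hq)).2 hpq)).2⟩
  choose a ha using crt
  have hj : ∀ i, ∀ p ∈ n.primeFactors, jacobiSym (a i) p = jacobiSym (w p i) p := by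
    intro i p hp
    rw [jacobiSym.mod_left, jacobiSym.mod_left (w p i)]
    congr 1
    exact_mod_cast ha i p hp
  have hval : ∀ i, ∀ p, p ∣ n → jacobiSym (((a i : ZMod n)).val : ℤ) p = jacobiSym (a i) p := by
    intro i p hp
    rw [jacobiSym.mod_left, jacobiSym.mod_left (a i), ZMod.val_natCast]
    congr 1
    exact_mod_cast Nat.mod_mod_of_dvd _ hp
  have hjn : ∀ i, jacobiSym (a i) n = jacobiSym (a i) p' := by
    intro i
    rw [jac_prod n hn hsf, ← Finset.mul_prod_erase _ _ hp',
      Finset.prod_congr rfl (fun p hp => hj i p (Finset.mem_erase.1 hp).2), hpr i, mul_one]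
  refine ⟨I, hI, fun i => (a i : ZMod n), fun i _ => ⟨?_, ?_⟩, ?_⟩
  · rw [ZMod.isUnit_iff_coprime]
    have h := hu p' hp' i
    rw [← hj i p' hp', ← hjn i] at h
    have h2 := mt jacobiSym.eq_zero_iff_not_coprime.2 h.ne_zero
    simpa using h2
  · rw [hval i n dvd_rfl, hval i p' (Nat.dvd_of_mem_primeFactors hp'), hjn]
  · have : ((∑ i ∈ I, a i * (S i).val : ℕ) : ZMod n) = 0 := by
      rw [ZMod.natCast_eq_zero_iff]
      refine (Nat.prod_primeFactors_of_squarefree hsf).symm.dvd.trans ?_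
      apply Finset.prod_primes_dvd
      · exact fun p hp => (Nat.prime_of_mem_primeFactors hp).prime
      · intro p hp
        rw [← Nat.modEq_zero_iff_dvd]
        refine Nat.ModEq.trans ?_ (Nat.modEq_zero_iff_dvd.2 (hs p hp))
        rw [← ZMod.natCast_eq_natCast_iff]
        push_cast
        apply Finset.sum_congr rfl
        intro i _
        rw [(ZMod.natCast_eq_natCast_iff _ _ _).2 (ha i p hp)]
    push_cast at this
    simpa using this

theorem upper (n p' : ℕ) (hn : n ≠ 0) (hsf : Squarefree n)
    (hp7 : ∀ p : ℕ, p.Prime → p ∣ n → 7 ≤ p)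
    (hO : n.primeFactors.card ≠ 2) (hp' : p' ∈ n.primeFactors)
    (S : Fin (n.primeFactors.card + 1) → ZMod n) : HasWZSSub (LSet n p') S := by
  have hP : ∀ p ∈ n.primeFactors, p.Prime ∧ 7 ≤ p := fun p hp =>
    ⟨Nat.prime_of_mem_primeFactors hp, hp7 p (Nat.prime_of_mem_primeFactors hp)
      (Nat.dvd_of_mem_primeFactors hp)⟩
  have hc := Finset.card_erase_add_one hp'
  have hcv : ∀ (I : Finset (Fin (n.primeFactors.card + 1))) (p : ℕ),
      I ∩ (Finset.univ.filter (fun i => ¬ p ∣ (S i).val)) = I.filter (fun i => ¬ p ∣ (S i).val) := by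
    intro I p
    ext i; simp
  by_cases h1 : (n.primeFactors.erase p').card = 0
  · obtain ⟨I, -, hI, h⟩ := combU n.primeFactors
      (fun p => Finset.univ.filter (fun i => ¬ p ∣ (S i).val)) Finset.univ (by simp)
    simp only [hcv] at h
    obtain ⟨w, hw, hs⟩ := nloc_any p' (hP p' hp').1 (hP p' hp').2 I (fun i => (S i).val) (h p' hp')
    have hone : ∀ p ∈ n.primeFactors, p = p' := fun p hp => by
      by_contra hne
      have : p ∈ n.primeFactors.erase p' := Finset.mem_erase.2 ⟨hne, hp⟩
      rw [Finset.card_eq_zero.1 h1] at this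
      simp at this
    refine finish n p' hn hsf hp' S I hI (fun _ => w) ?_ ?_ ?_
    · intro p hp; rw [hone p hp]; exact hw
    · intro p hp; rw [hone p hp]; exact hs
    · intro i; rw [Finset.card_eq_zero.1 h1]; simp
  · obtain ⟨I, hI, h, h2⟩ := combMain (n.primeFactors.erase p') p' (by simp) (by omega)
      (fun p => Finset.univ.filter (fun i => ¬ p ∣ (S i).val)) Finset.univ (by simp; omega)
    rw [Finset.insert_erase hp'] at h
    simp only [hcv] at h h2
    obtain ⟨w, a1, a2, a3⟩ := choose_weights n.primeFactors (n.primeFactors.erase p')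
      (Finset.erase_subset _ _) hP I (fun i => (S i).val) h h2
    exact finish n p' hn hsf hp' S I hI w a1 a2 a3

theorem lower (n : ℕ) (hn : n ≠ 0) (hsf : Squarefree n) (A : Set (ZMod n))
    (hA : ∀ a ∈ A, IsUnit a) (k : ℕ) (hk : k ≤ n.primeFactorsList.length)
    (h : ∀ S : Fin k → ZMod n, HasWZSSub A S) : False := by
  set P : Fin k → ℕ := fun j => n.primeFactorsList.get ⟨j, by omega⟩ with hPdef
  have hmem : ∀ j, P j ∈ n.primeFactorsList := fun j => List.get_mem _ _
  have hpr : ∀ j, (P j).Prime := fun j => Nat.prime_of_mem_primeFactorsList (hmem j)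
  have hdv : ∀ j, P j ∣ n := fun j => Nat.dvd_of_mem_primeFactorsList (hmem j)
  have hinj : ∀ i j, P i = P j → i = j := by
    intro i j hij
    have := List.nodup_iff_injective_get.1 ((Nat.squarefree_iff_nodup_primeFactorsList hn).1 hsf) hij
    simpa [Fin.ext_iff] using this
  obtain ⟨I, ⟨j, hj⟩, a, ha, hsum⟩ := h (fun i => ((n / P i : ℕ) : ZMod n))
  haveI := Fact.mk (hpr j)
  have h2 := congrArg (ZMod.castHom (hdv j) (ZMod (P j))) hsum
  rw [map_sum, map_zero, Finset.sum_eq_single_of_mem j hj] at h2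
  · rw [map_mul, map_natCast] at h2
    rcases mul_eq_zero.1 h2 with h3 | h3
    · exact ((hA _ (ha j hj)).map (ZMod.castHom (hdv j) (ZMod (P j)))).ne_zero h3
    · rw [ZMod.natCast_eq_zero_iff] at h3
      have h4 : P j * P j ∣ n := by
        obtain ⟨m, hm⟩ := h3
        exact ⟨m, by rw [mul_assoc, ← hm, Nat.mul_div_cancel' (hdv j)]⟩
      exact (hpr j).one_lt.ne' (Nat.isUnit_iff.1 (hsf _ h4))
  · intro i _ hij
    rw [map_mul, map_natCast]
    have : P j ∣ n / P i := by
      have hcop := (Nat.coprime_primes (hpr j) (hpr i)).2 (fun e => hij (hinj _ _ e).symm)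
      apply hcop.dvd_of_dvd_mul_left
      rw [Nat.mul_div_cancel' (hdv i)]
      exact hdv j
    rw [(ZMod.natCast_eq_zero_iff _ _).2 this, mul_zero]

theorem davenport_L (n p' : ℕ) (hodd : Odd n) (hsf : Squarefree n)
    (hp7 : ∀ p : ℕ, p.Prime → p ∣ n → 7 ≤ p)
    (hOmega : (Nat.primeFactorsList n).length ≠ 2)
    (hp' : p'.Prime) (hp'n : p' ∣ n) :
    DavW n (LSet n p') = (Nat.primeFactorsList n).length + 1 := by
  have hn : n ≠ 0 := hsf.ne_zero
  have hcard : n.primeFactors.card = n.primeFactorsList.length :=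
    List.toFinset_card_of_nodup ((Nat.squarefree_iff_nodup_primeFactorsList hn).1 hsf)
  have hmem : n.primeFactorsList.length + 1 ∈
      {k | 0 < k ∧ ∀ S : Fin k → ZMod n, HasWZSSub (LSet n p') S} := by
    refine ⟨Nat.succ_pos _, ?_⟩
    rw [← hcard]
    exact upper n p' hn hsf hp7 (by omega) (Nat.mem_primeFactors.2 ⟨hp', hp'n, hn⟩)
  apply le_antisymm (Nat.sInf_le hmem)
  by_contra hlt
  have hk := Nat.sInf_mem ⟨_, hmem⟩
  exact lower n hn hsf (LSet n p') (fun a ha => ha.1) _ (by omega) hk.2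
end

section
/- Let n = p'·q, where p' and q are distinct primes, both at least 7, and let A = L(n;p'). Then D_A(n) = 4. -/
open scoped BigOperators

open scoped Pointwise in
lemma sumset_aux {p : ℕ} [Fact p.Prime] {ι : Type*} [DecidableEq ι] (W : Finset (ZMod p))
    (hW : W.Nonempty) (y : ι → ZMod p) (s : Finset ι) (hs : ∀ i ∈ s, y i ≠ 0) :
    ∃ B : Finset (ZMod p), min p (s.card * (W.card - 1) + 1) ≤ B.card ∧
      ∀ b ∈ B, ∃ a : ι → ZMod p, (∀ i, a i ∈ W) ∧ ∑ i ∈ s, a i * y i = b := by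
  induction s using Finset.induction_on with
  | empty =>
    obtain ⟨w, hw⟩ := hW
    exact ⟨{0}, by simp, fun b hb => ⟨fun _ => w, fun _ => hw, by simpa using (Finset.mem_singleton.1 hb).symm⟩⟩
  | insert j s hj ih =>
    obtain ⟨B, hB, hB'⟩ := ih (fun i hi => hs i (Finset.mem_insert_of_mem hi))
    have hyj := hs j (Finset.mem_insert_self _ _)
    have hp : 0 < p := (Fact.out : p.Prime).pos
    have hBne : B.Nonempty := by
      rw [← Finset.card_pos]
      have : 0 < min p (s.card * (W.card - 1) + 1) := lt_min hp (by omega)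
      omega
    have hcd := ZMod.cauchy_davenport (p := p) Fact.out (hW.image (fun w => w * y j)) hBne
    have hc : (W.image (fun w => w * y j)).card = W.card :=
      Finset.card_image_of_injective _ (mul_left_injective₀ hyj)
    have hWp : 0 < W.card := hW.card_pos
    refine ⟨W.image (fun w => w * y j) + B, ?_, ?_⟩
    · rw [hc] at hcd
      rw [Finset.card_insert_of_notMem hj, add_mul]
      refine le_trans ?_ hcd
      rcases min_le_iff.1 hB with h | h
      · apply le_min
        · exact min_le_left _ _
        · exact (min_le_left _ _).trans (by omega)
      · apply min_le_min_left
        omega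
    · intro b hb
      obtain ⟨u, hu, v, hv, rfl⟩ := Finset.mem_add.1 hb
      obtain ⟨w, hw, rfl⟩ := Finset.mem_image.1 hu
      obtain ⟨a, ha, hav⟩ := hB' v hv
      refine ⟨Function.update a j w, ?_, ?_⟩
      · intro i
        by_cases h : i = j
        · subst h; simpa using hw
        · simpa [h] using ha i
      · rw [Finset.sum_insert hj, Function.update_self, ← hav]
        congr 1
        apply Finset.sum_congr rfl
        intro i hi
        have : i ≠ j := fun h => hj (h ▸ hi)
        rw [Function.update_of_ne this]

lemma zero_sum_aux {p : ℕ} [Fact p.Prime] {ι : Type*} [DecidableEq ι] (W : Finset (ZMod p))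
    (hW : W.Nonempty) (y : ι → ZMod p) (s : Finset ι)
    (h : (s.filter (fun i => y i ≠ 0)).card = 0 ∨
      p ≤ (s.filter (fun i => y i ≠ 0)).card * (W.card - 1) + 1) :
    ∃ a : ι → ZMod p, (∀ i, a i ∈ W) ∧ ∑ i ∈ s, a i * y i = 0 := by
  have key : ∀ a : ι → ZMod p,
      ∑ i ∈ s.filter (fun i => y i ≠ 0), a i * y i = ∑ i ∈ s, a i * y i := by
    intro a
    apply Finset.sum_filter_of_ne
    intro i _ h1 h2
    exact h1 (by rw [h2, mul_zero])
  rcases h with h | h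
  · obtain ⟨w, hw⟩ := hW
    refine ⟨fun _ => w, fun _ => hw, ?_⟩
    rw [← key, Finset.card_eq_zero.1 h, Finset.sum_empty]
  · obtain ⟨B, hB, hB'⟩ := sumset_aux W hW y (s.filter (fun i => y i ≠ 0))
      (fun i hi => (Finset.mem_filter.1 hi).2)
    rw [min_eq_left h] at hB
    have : B = Finset.univ := by
      apply Finset.eq_univ_of_card
      rw [ZMod.card]
      exact le_antisymm (by simpa [ZMod.card] using Finset.card_le_univ B) hB
    obtain ⟨a, ha, h0⟩ := hB' 0 (by simp [this])
    exact ⟨a, ha, by rw [← key, h0]⟩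

open Classical in
lemma card_sq_aux (q : ℕ) [Fact q.Prime] :
    q ≤ 2 * (Finset.univ.filter (fun x : ZMod q => x ≠ 0 ∧ IsSquare x)).card + 1 := by
  have h := Finset.card_le_mul_card_image_of_maps_to
    (s := Finset.univ.erase (0 : ZMod q))
    (t := Finset.univ.filter (fun x : ZMod q => x ≠ 0 ∧ IsSquare x))
    (f := fun x => x * x) (by
      intro x hx
      have hx0 := Finset.ne_of_mem_erase hx
      simp [hx0]) 2 (by
      intro b hb
      by_cases hne : ((Finset.univ.erase (0 : ZMod q)).filter (fun x => x * x = b)).Nonempty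
      · obtain ⟨c, hc⟩ := hne
        refine (Finset.card_le_card (t := {c, -c}) ?_).trans Finset.card_le_two
        intro x hx
        have h1 := (Finset.mem_filter.1 hx).2
        have h2 := (Finset.mem_filter.1 hc).2
        have := mul_self_eq_mul_self_iff.1 (h1.trans h2.symm)
        simpa using this
      · rw [Finset.not_nonempty_iff_eq_empty.1 hne]; simp)
  rw [Finset.card_erase_of_mem (Finset.mem_univ _), Finset.card_univ, ZMod.card] at h
  omega

lemma mem_LSet_aux (p q : ℕ) [Fact p.Prime] [Fact q.Prime] (hpq : p.Coprime q)
    (a : ZMod (p * q)) :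
    a ∈ LSet (p * q) p ↔ (ZMod.chineseRemainder hpq a).1 ≠ 0 ∧
      (ZMod.chineseRemainder hpq a).2 ≠ 0 ∧ IsSquare (ZMod.chineseRemainder hpq a).2 := by
  have hu : IsUnit a ↔ (ZMod.chineseRemainder hpq a).1 ≠ 0 ∧
      (ZMod.chineseRemainder hpq a).2 ≠ 0 := by
    rw [← MulEquiv.isUnit_map (ZMod.chineseRemainder hpq), Prod.isUnit_iff,
      isUnit_iff_ne_zero, isUnit_iff_ne_zero]
  have hp : p ≠ 0 := (Fact.out : p.Prime).ne_zero
  have hq : q ≠ 0 := (Fact.out : q.Prime).ne_zero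
  have : NeZero p := ⟨hp⟩
  have : NeZero q := ⟨hq⟩
  have : NeZero (p * q) := ⟨mul_ne_zero hp hq⟩
  have hval : ZMod.chineseRemainder hpq a = ((a.val : ZMod p), (a.val : ZMod q)) := by
    conv_lhs => rw [← ZMod.natCast_zmod_val a]
    rw [map_natCast]; rfl
  simp only [LSet, Set.mem_ofPred_eq]
  rw [hu, and_assoc]
  refine and_congr_right fun h1 => and_congr_right fun h2 => ?_
  rw [hval] at h1 h2 ⊢
  simp only at h1 h2 ⊢
  have h1' : jacobiSym (a.val : ℤ) p ≠ 0 := by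
    rw [← jacobiSym.legendreSym.to_jacobiSym, Ne, legendreSym.eq_zero_iff]
    simpa using h1
  rw [jacobiSym.mul_right, mul_eq_left₀ h1', ← jacobiSym.legendreSym.to_jacobiSym,
    legendreSym.eq_one_iff _ (by simpa using h2)]
  simp

lemma mono_aux {n : ℕ} (A : Set (ZMod n)) {k l : ℕ} (hkl : k ≤ l) (S : Fin l → ZMod n)
    (h : HasWZSSub A (fun i : Fin k => S (Fin.castLE hkl i))) : HasWZSSub A S := by
  obtain ⟨I, hI, a, ha, hs⟩ := h
  refine ⟨I.map (Fin.castLEEmb hkl), by simpa using hI,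
    fun j => if h : j.val < k then a ⟨j, h⟩ else 0, ?_, ?_⟩
  · intro i hi
    obtain ⟨j, hj, rfl⟩ := Finset.mem_map.1 hi
    simpa using ha j hj
  · rw [Finset.sum_map]
    simpa using hs

lemma lower_aux (p q : ℕ) [Fact p.Prime] [Fact q.Prime] (hpq : p.Coprime q) (hq7 : 7 ≤ q) :
    ∃ S : Fin 3 → ZMod (p * q), ¬ HasWZSSub (LSet (p * q) p) S := by
  obtain ⟨r, hr⟩ := FiniteField.exists_nonsquare (F := ZMod q) (by rw [ZMod.ringChar_zmod_n]; omega)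
  let e := ZMod.chineseRemainder hpq
  refine ⟨![e.symm (1, 0), e.symm (0, 1), e.symm (0, -r)], ?_⟩
  rintro ⟨I, hI, a, ha, hs⟩
  have hs' := congrArg e hs
  rw [map_sum, map_zero] at hs'
  have hr0 : r ≠ 0 := by rintro rfl; exact hr IsSquare.zero
  simp only [mem_LSet_aux p q hpq] at ha
  have hfst := congrArg Prod.fst hs'
  have hsnd := congrArg Prod.snd hs'
  rw [Prod.fst_sum, ← Finset.univ_inter I, ← Finset.sum_ite_mem, Fin.sum_univ_three] at hfst
  rw [Prod.snd_sum, ← Finset.univ_inter I, ← Finset.sum_ite_mem, Fin.sum_univ_three] at hsnd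
  simp [e] at hfst hsnd
  have h0 : (0 : Fin 3) ∉ I := fun h => (ha 0 h).1 (hfst h)
  by_cases h1 : (1 : Fin 3) ∈ I <;> by_cases h2 : (2 : Fin 3) ∈ I <;> simp [h1, h2] at hsnd
  · obtain ⟨-, hb, hb'⟩ := ha 1 h1
    obtain ⟨-, hc, hc'⟩ := ha 2 h2
    apply hr
    have : r = (ZMod.chineseRemainder hpq (a 1)).2 / (ZMod.chineseRemainder hpq (a 2)).2 := by
      rw [eq_div_iff hc]
      linear_combination -hsnd
    rw [this]
    exact hb'.div hc'
  · exact (ha 1 h1).2.1 hsnd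
  · rcases hsnd with h | h
    · exact (ha 2 h2).2.1 h
    · exact hr0 h
  · obtain ⟨i, hi⟩ := hI
    fin_cases i
    · exact h0 hi
    · exact h1 hi
    · exact h2 hi

lemma upper_aux (p q : ℕ) [Fact p.Prime] [Fact q.Prime] (hpq : p.Coprime q) (hp7 : 7 ≤ p)
    (hq7 : 7 ≤ q) (S : Fin 4 → ZMod (p * q)) : HasWZSSub (LSet (p * q) p) S := by
  classical
  let e := ZMod.chineseRemainder hpq
  let x : Fin 4 → ZMod p := fun i => (e (S i)).1
  let y : Fin 4 → ZMod q := fun i => (e (S i)).2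
  have main : ∀ I : Finset (Fin 4), I.Nonempty →
      (I.filter (fun i => x i ≠ 0)).card ≠ 1 →
      ((I.filter (fun i => y i ≠ 0)).card = 0 ∨ 3 ≤ (I.filter (fun i => y i ≠ 0)).card) →
      HasWZSSub (LSet (p * q) p) S := by
    intro I hI hx hy
    have hcW : (Finset.univ.erase (0 : ZMod p)).card = p - 1 := by
      rw [Finset.card_erase_of_mem (Finset.mem_univ _), Finset.card_univ, ZMod.card]
    have hcQ := card_sq_aux q
    obtain ⟨a, ha, ha0⟩ := zero_sum_aux (Finset.univ.erase (0 : ZMod p))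
      (Finset.card_pos.1 (by omega)) x I (by
        by_cases h0 : (I.filter (fun i => x i ≠ 0)).card = 0
        · exact Or.inl h0
        · right
          have h2 : 2 ≤ (I.filter (fun i => x i ≠ 0)).card := by omega
          have := Nat.mul_le_mul_right ((Finset.univ.erase (0 : ZMod p)).card - 1) h2
          omega)
    obtain ⟨b, hb, hb0⟩ := zero_sum_aux
      (Finset.univ.filter (fun x : ZMod q => x ≠ 0 ∧ IsSquare x))
      (Finset.card_pos.1 (by omega)) y I (by
        rcases hy with h0 | h3
        · exact Or.inl h0
        · right
          have := Nat.mul_le_mul_right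
            ((Finset.univ.filter (fun x : ZMod q => x ≠ 0 ∧ IsSquare x)).card - 1) h3
          omega)
    refine ⟨I, hI, fun i => e.symm (a i, b i), ?_, ?_⟩
    · intro i _
      rw [mem_LSet_aux p q hpq]
      have h1 := Finset.ne_of_mem_erase (ha i)
      have h2 := (Finset.mem_filter.1 (hb i)).2
      simpa [e] using ⟨h1, h2⟩
    · apply e.injective
      rw [map_sum, map_zero]
      apply Prod.ext
      · rw [Prod.fst_sum]; simpa [x] using ha0
      · rw [Prod.snd_sum]; simpa [y] using hb0
  by_cases hz : ∃ i, x i = 0 ∧ y i = 0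
  · obtain ⟨i, hi1, hi2⟩ := hz
    exact main {i} (by simp) (by simp [Finset.filter_singleton, hi1])
      (by simp [Finset.filter_singleton, hi2])
  push Not at hz
  by_contra hcon
  have main' : ∀ I : Finset (Fin 4), I.Nonempty →
      (I.filter (fun i => x i ≠ 0)).card ≠ 1 →
      ¬ ((I.filter (fun i => y i ≠ 0)).card = 0 ∨ 3 ≤ (I.filter (fun i => y i ≠ 0)).card) :=
    fun I h1 h2 h3 => hcon (main I h1 h2 h3)
  have comb : ∀ X Y : Fin 4 → Bool, (∀ i, X i = false → Y i = true) →
      ∃ I : Finset (Fin 4), I.Nonempty ∧ (I.filter (fun i => X i = true)).card ≠ 1 ∧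
      ((I.filter (fun i => Y i = true)).card = 0 ∨
        3 ≤ (I.filter (fun i => Y i = true)).card) := by
    decide +kernel
  obtain ⟨I, h1, h2, h3⟩ := comb (fun i => decide (x i ≠ 0)) (fun i => decide (y i ≠ 0)) (by
    intro i; simpa using hz i)
  simp only [decide_eq_true_eq] at h2 h3
  exact main' I h1 h2 h3

theorem davenport_L_pq (n p' q : ℕ) (hp' : p'.Prime) (hq : q.Prime) (hne : p' ≠ q)
    (hp7 : 7 ≤ p') (hq7 : 7 ≤ q) (hn : n = p' * q) :
    DavW n (LSet n p') = 4 := by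
  subst hn
  have := Fact.mk hp'
  have := Fact.mk hq
  have hpq : p'.Coprime q := (Nat.coprime_primes hp' hq).2 hne
  apply le_antisymm
  · exact Nat.sInf_le ⟨by norm_num, upper_aux p' q hpq hp7 hq7⟩
  · apply le_csInf
    · exact ⟨4, by norm_num, upper_aux p' q hpq hp7 hq7⟩
    · rintro k ⟨-, hk⟩
      by_contra hlt
      obtain ⟨S, hS⟩ := lower_aux p' q hpq hq7
      exact hS (mono_aux _ (by omega : k ≤ 3) S (hk _))
end

section
/- Let n be odd, let A = S(n), and let p' be a prime divisor of n with v_{p'}(n) ≥ 2. Let n' = n/p' and let f : U(n) → U(n') be the natural map. Then L(n';p') ⊆ f(A). -/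
open scoped BigOperators

theorem lunits_subset_image_S (n p' : ℕ) (hodd : Odd n) (hp' : p'.Prime)
    (hp'n : p' ∣ n) (hv : 2 ≤ n.factorization p') :
    {b : (ZMod (n / p'))ˣ |
        jacobiSym (((b : ZMod (n / p')).val : ℕ) : ℤ) (n / p')
          = jacobiSym (((b : ZMod (n / p')).val : ℕ) : ℤ) p'}
      ⊆ (ZMod.unitsMap (Nat.div_dvd_of_dvd hp'n)) ''
          {a : (ZMod n)ˣ | jacobiSym (((a : ZMod n).val : ℕ) : ℤ) n = 1} := by
  intro b hb
  have hb' : jacobiSym (((b : ZMod (n / p')).val : ℕ) : ℤ) (n / p')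
          = jacobiSym (((b : ZMod (n / p')).val : ℕ) : ℤ) p' := hb
  have hn0 : n ≠ 0 := by rintro rfl; simp at hodd
  haveI : NeZero n := ⟨hn0⟩
  have hm0 : n / p' ≠ 0 := (Nat.div_pos (Nat.le_of_dvd (Nat.pos_of_ne_zero hn0) hp'n) hp'.pos).ne'
  haveI : NeZero (n / p') := ⟨hm0⟩
  haveI : NeZero p' := ⟨hp'.ne_zero⟩
  have hnm : n = n / p' * p' := (Nat.div_mul_cancel hp'n).symm
  have hpm : p' ∣ n / p' := by
    have h2 : p' ^ 2 ∣ n := (hp'.pow_dvd_iff_le_factorization hn0).2 hv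
    rw [pow_two] at h2
    exact (Nat.dvd_div_iff_mul_dvd hp'n).2 h2
  obtain ⟨a, ha⟩ := ZMod.unitsMap_surjective (Nat.div_dvd_of_dvd hp'n) b
  refine ⟨a, ?_, ha⟩
  have hval : (b : ZMod (n / p')).val = (a : ZMod n).val % (n / p') := by
    rw [← ha, ZMod.unitsMap_val, ← ZMod.natCast_val, ZMod.val_natCast]
  have h1 : jacobiSym (((b : ZMod (n / p')).val : ℕ) : ℤ) (n / p')
      = jacobiSym (((a : ZMod n).val : ℕ) : ℤ) (n / p') := by
    rw [hval, jacobiSym.mod_left (((a : ZMod n).val : ℕ) : ℤ)]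
    norm_cast
  have h2 : jacobiSym (((b : ZMod (n / p')).val : ℕ) : ℤ) p'
      = jacobiSym (((a : ZMod n).val : ℕ) : ℤ) p' := by
    apply jacobiSym.mod_left'
    rw [hval]
    norm_cast
    exact Nat.mod_mod_of_dvd _ hpm
  have hcop : Int.gcd (((a : ZMod n).val : ℕ) : ℤ) p' = 1 := by
    have h := ZMod.val_coe_unit_coprime a
    rw [Int.gcd_natCast_natCast]
    exact Nat.Coprime.coprime_dvd_right hp'n h
  show jacobiSym (((a : ZMod n).val : ℕ) : ℤ) n = 1
  have h3 : jacobiSym (((a : ZMod n).val : ℕ) : ℤ) n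
      = jacobiSym (((a : ZMod n).val : ℕ) : ℤ) (n / p')
        * jacobiSym (((a : ZMod n).val : ℕ) : ℤ) p' := by
    rw [← jacobiSym.mul_right, ← hnm]
  rw [h3, ← h1, hb', h2, ← pow_two]
  exact jacobiSym.sq_one hcop
end

section
/- Let n be odd and suppose n has a unique prime divisor p' with v_{p'}(n) = 2 while v_q(n) = 1 for every other prime divisor q of n. Let A = S(n). Let S = (x_1,…,x_l) be a sequence in Z_n such that for every prime divisor p of n at least two terms of S are coprime to p. Let n' = n/p'² and let S' be the image of S under the natural map Z_n → Z_{n'}. If at most one term of S' is a unit of Z_{n'}, then S is an A-weighted zero-sum sequence. -/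
open scoped BigOperators

/-- Unit-weighted zero sums, integer version. -/
theorem unit_zs (l : ℕ) (S : Fin l → ℤ) (n : ℕ) : Odd n →
    (∀ p : ℕ, p.Prime → p ∣ n → ∃ i j, i ≠ j ∧ ¬ (p : ℤ) ∣ S i ∧ ¬ (p : ℤ) ∣ S j) →
    ∃ b : Fin l → ℤ, (∀ i, IsCoprime (b i) (n : ℤ)) ∧ (n : ℤ) ∣ ∑ i, b i * S i := by
  induction n using Nat.recOnPosPrimePosCoprime with
  | zero => intro h; exact absurd h (by decide)
  | one => intro _ _; exact ⟨fun _ => 1, fun i => isCoprime_one_left, by simp⟩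
  | prime_pow p k hp hk =>
    intro hodd h
    obtain ⟨i, j, hij, hi, hj⟩ := h p hp (dvd_pow_self p (by omega))
    have hpZ : Prime (p : ℤ) := Nat.prime_iff_prime_int.mp hp
    have hp2 : ¬ (p : ℤ) ∣ 2 := by
      intro h
      have h' : p ∣ 2 := by exact_mod_cast h
      have := (Nat.prime_dvd_prime_iff_eq hp Nat.prime_two).1 h'
      subst this
      have : Even (2 ^ k) := (Nat.even_pow.2 ⟨even_two, by omega⟩)
      exact (Nat.not_even_iff_odd.2 hodd) this
    have cop : ∀ z : ℤ, ¬ (p : ℤ) ∣ z → IsCoprime z ((p ^ k : ℕ) : ℤ) := by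
      intro z hz
      push_cast
      exact ((hpZ.coprime_iff_not_dvd.2 hz).symm).pow_right
    set T : ℤ := ∑ t ∈ (Finset.univ.erase i).erase j, S t with hT
    obtain ⟨e, he, hes⟩ : ∃ e : ℤ, (e = 1 ∨ e = -1) ∧ ¬ (p : ℤ) ∣ e * S i + T := by
      by_contra! hc
      have a1 := hc 1 (Or.inl rfl)
      have a2 := hc (-1) (Or.inr rfl)
      have : (p : ℤ) ∣ 2 * S i := by
        have := dvd_sub a1 a2
        ring_nf at this ⊢
        exact this
      rcases hpZ.dvd_or_dvd this with h | h
      · exact hp2 h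
      · exact hi h
    obtain ⟨u, v, huv⟩ := cop (S j) hj
    have hu : ¬ (p : ℤ) ∣ u := by
      intro hu
      have h1 : (p : ℤ) ∣ ((p ^ k : ℕ) : ℤ) := by
        push_cast; exact dvd_pow_self _ (by omega)
      exact hpZ.not_dvd_one (huv ▸ dvd_add (hu.mul_right _) (h1.mul_left _))
    refine ⟨fun t => if t = j then -(e * S i + T) * u else if t = i then e else 1, ?_, ?_⟩
    · intro t
      dsimp only
      split_ifs
      · apply cop
        rw [neg_mul, dvd_neg]
        intro h
        rcases hpZ.dvd_or_dvd h with h | h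
        · exact hes h
        · exact hu h
      · rcases he with rfl | rfl
        · exact isCoprime_one_left
        · exact isCoprime_one_left.neg_left
      · exact isCoprime_one_left
    · rw [← Finset.add_sum_erase _ _ (Finset.mem_univ i),
        ← Finset.add_sum_erase _ _ (show j ∈ Finset.univ.erase i by simp [hij.symm])]
      have : ∑ t ∈ (Finset.univ.erase i).erase j,
          (if t = j then -(e * S i + T) * u else if t = i then e else 1) * S t = T := by
        apply Finset.sum_congr rfl
        intro t ht
        simp only [Finset.mem_erase, Finset.mem_univ, and_true] at ht
        simp [ht.1, ht.2]
      rw [this]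
      simp only [if_neg hij, if_true]
      refine ⟨(e * S i + T) * v, ?_⟩
      linear_combination (-(e * S i + T)) * huv
  | coprime m n hm hn hmn ihm ihn =>
    intro hodd h
    obtain ⟨b, hb, hbs⟩ := ihm (Nat.odd_mul.1 hodd).1 (fun p hp hd => h p hp (hd.mul_right _))
    obtain ⟨c, hc, hcs⟩ := ihn (Nat.odd_mul.1 hodd).2 (fun p hp hd => h p hp (hd.mul_left _))
    have hcop : IsCoprime (m : ℤ) (n : ℤ) := Nat.isCoprime_iff_coprime.2 hmn
    obtain ⟨u, v, huv⟩ := id hcop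
    have e1 : ∀ i, b i * (v * n) + c i * (u * m) = b i + (m : ℤ) * (u * (c i - b i)) := by
      intro i; linear_combination (b i) * huv
    have e2 : ∀ i, b i * (v * n) + c i * (u * m) = c i + (n : ℤ) * (v * (b i - c i)) := by
      intro i; linear_combination (c i) * huv
    refine ⟨fun i => b i * (v * n) + c i * (u * m), ?_, ?_⟩
    · intro i
      push_cast
      apply IsCoprime.mul_right
      · rw [e1]; exact (hb i).add_mul_left_left _
      · rw [e2]; exact (hc i).add_mul_left_left _
    · push_cast
      apply hcop.mul_dvd
      · simp only [e1, add_mul, Finset.sum_add_distrib]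
        refine dvd_add hbs (Finset.dvd_sum fun i _ => ?_)
        rw [mul_assoc]; exact dvd_mul_right _ _
      · simp only [e2, add_mul, Finset.sum_add_distrib]
        refine dvd_add hcs (Finset.dvd_sum fun i _ => ?_)
        rw [mul_assoc]; exact dvd_mul_right _ _

/-- A twisting element at a prime `q` exactly dividing `n`. -/
theorem exists_twist (q m : ℕ) (hq : q.Prime) (hq2 : q ≠ 2) (hm : m ≠ 0) (h : q.Coprime m) :
    ∃ u : ℤ, jacobiSym u (q * m) = -1 ∧ (m : ℤ) ∣ u - 1 := by
  have : Fact q.Prime := ⟨hq⟩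
  have : NeZero q := ⟨hq.ne_zero⟩
  have : NeZero m := ⟨hm⟩
  obtain ⟨g, hg⟩ := FiniteField.exists_nonsquare (F := ZMod q) (by rwa [ZMod.ringChar_zmod_n])
  obtain ⟨u, hu1, hu2⟩ := Nat.chineseRemainder h g.val 1
  refine ⟨(u : ℤ), ?_, ?_⟩
  · rw [jacobiSym.mul_right, ← jacobiSym.legendreSym.to_jacobiSym]
    have a1 : legendreSym q (u : ℤ) = -1 := by
      rw [legendreSym.eq_neg_one_iff]
      have : ((u : ℤ) : ZMod q) = g := by
        have := (ZMod.natCast_eq_natCast_iff _ _ _).2 hu1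
        simpa using this
      rwa [this]
    have a2 : jacobiSym (u : ℤ) m = 1 := by
      have : (u : ℤ) % m = 1 % m := by exact_mod_cast hu2
      rw [jacobiSym.mod_left' this, jacobiSym.one_left]
    rw [a1, a2]; rfl
  · have := (Nat.modEq_iff_dvd.1 hu2.symm)
    simpa using this

theorem sset_zero_sum_nonsquarefree (n p' : ℕ) (hodd : Odd n) (hp' : p'.Prime)
    (hp'n : p' ∣ n) (hv : n.factorization p' = 2)
    (hq : ∀ q : ℕ, q.Prime → q ∣ n → q ≠ p' → n.factorization q = 1)
    {l : ℕ} (S : Fin l → ZMod n)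
    (h2 : ∀ p : ℕ, p.Prime → p ∣ n → 2 ≤ {i : Fin l | Nat.Coprime ((S i).val) p}.ncard)
    (h1 : {i : Fin l |
        IsUnit (ZMod.castHom
          (Nat.div_dvd_of_dvd (show p' ^ 2 ∣ n by
            rw [← hv]; exact Nat.ordProj_dvd n p'))
          (ZMod (n / p' ^ 2)) (S i))}.ncard ≤ 1) :
    IsWZS (JSet n) S := by
  have hn0 : n ≠ 0 := by rintro rfl; exact absurd hodd (by decide)
  have : NeZero n := ⟨hn0⟩
  obtain ⟨b, hb, hbs⟩ := unit_zs l (fun i => ((S i).val : ℤ)) n hodd (by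
    intro p hp hpn
    have := h2 p hp hpn
    obtain ⟨i, hi, j, hj, hij⟩ := (Set.one_lt_ncard (Set.toFinite _)).1 this
    refine ⟨i, j, hij, ?_, ?_⟩
    · intro h
      exact (hp.coprime_iff_not_dvd.1 (Nat.Coprime.symm hi)) (by exact_mod_cast h)
    · intro h
      exact (hp.coprime_iff_not_dvd.1 (Nat.Coprime.symm hj)) (by exact_mod_cast h))
  have hdvd : p' ^ 2 ∣ n := by rw [← hv]; exact Nat.ordProj_dvd n p'
  have twist : ∀ q : ℕ, q.Prime → q ∣ n / p' ^ 2 →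
      ∃ u : ℤ, jacobiSym u n = -1 ∧ ∀ x : ℤ, (q : ℤ) ∣ x → (n : ℤ) ∣ (u - 1) * x := by
    intro q hqp hqd
    have hqn : q ∣ n := hqd.trans (Nat.div_dvd_of_dvd hdvd)
    have hqp' : q ≠ p' := by
      rintro rfl
      have h3 : q ^ 3 ∣ n := by
        rw [pow_succ]
        exact Nat.mul_dvd_of_dvd_div hdvd hqd
      have := (hqp.pow_dvd_iff_le_factorization hn0).1 h3
      omega
    have hf := hq q hqp hqn hqp'
    have hq2 : q ≠ 2 := by
      rintro rfl
      exact (Nat.not_even_iff_odd.2 hodd) (even_iff_two_dvd.2 hqn)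
    obtain ⟨m, hm⟩ := hqn
    have hm0 : m ≠ 0 := by rintro rfl; exact hn0 (by simpa using hm)
    have hcop : q.Coprime m := by
      rw [hqp.coprime_iff_not_dvd]
      intro hd
      have h3 : q ^ 2 ∣ n := by rw [hm, pow_two]; exact Nat.mul_dvd_mul_left q hd
      have := (hqp.pow_dvd_iff_le_factorization hn0).1 h3
      omega
    obtain ⟨u, hu, hum⟩ := exists_twist q m hqp hq2 hm0 hcop
    refine ⟨u, by rw [hm]; exact hu, fun x hx => ?_⟩
    rw [hm, mul_comm (u - 1)]
    push_cast
    exact mul_dvd_mul hx hum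
  have hunit : ∀ i, IsUnit (ZMod.castHom (Nat.div_dvd_of_dvd hdvd) (ZMod (n / p' ^ 2)) (S i)) ↔
      Nat.Coprime (S i).val (n / p' ^ 2) := by
    intro i
    rw [← ZMod.isUnit_iff_coprime]
    rw [ZMod.castHom_apply, ZMod.natCast_val]
  have hJ : ∀ z : ℤ, IsCoprime z (n : ℤ) → jacobiSym z n = 1 ∨ jacobiSym z n = -1 := by
    intro z hz
    exact jacobiSym.eq_one_or_neg_one (Int.isCoprime_iff_gcd_eq_one.1 hz)
  have hJ' : ∀ z : ℤ, jacobiSym z n ≠ 0 → IsCoprime z (n : ℤ) := by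
    intro z hz
    rw [Int.isCoprime_iff_gcd_eq_one]
    by_contra hg
    exact hz (jacobiSym.eq_zero_iff_not_coprime.2 hg)
  have h1' := (Set.ncard_le_one (Set.toFinite _)).1 h1
  obtain ⟨c, hc, hcu⟩ : ∃ c : ℤ, IsCoprime c (n : ℤ) ∧
      ∀ i, Nat.Coprime (S i).val (n / p' ^ 2) → jacobiSym (c * b i) n = 1 := by
    by_cases hex : ∃ i, Nat.Coprime (S i).val (n / p' ^ 2) ∧ jacobiSym (b i) n = -1
    · obtain ⟨i, hi, hib⟩ := hex
      have hn1 : n / p' ^ 2 ≠ 1 := by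
        intro h
        obtain ⟨s, -, t, -, hst⟩ := (Set.one_lt_ncard (Set.toFinite _)).1 (h2 p' hp' hp'n)
        exact hst (h1' s ((hunit s).2 (by rw [h]; exact Nat.coprime_one_right _)) t
          ((hunit t).2 (by rw [h]; exact Nat.coprime_one_right _)))
      obtain ⟨q, hqp, hqd⟩ := Nat.exists_prime_and_dvd hn1
      obtain ⟨u, hu, -⟩ := twist q hqp hqd
      refine ⟨u, hJ' u (by rw [hu]; decide), fun t ht => ?_⟩
      have : t = i := h1' t ((hunit t).2 ht) i ((hunit i).2 hi)
      rw [this, jacobiSym.mul_left, hu, hib]; rfl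
    · refine ⟨1, isCoprime_one_left, fun i hi => ?_⟩
      rw [one_mul]
      exact (hJ _ (hb i)).resolve_right fun h => hex ⟨i, hi, h⟩
  have key : ∀ i, ∃ a : ℤ, jacobiSym a n = 1 ∧
      (n : ℤ) ∣ (a - c * b i) * ((S i).val : ℤ) := by
    intro i
    rcases hJ _ (hc.mul_left (hb i)) with h | h
    · exact ⟨c * b i, h, by simp⟩
    · have hnc : ¬ Nat.Coprime (S i).val (n / p' ^ 2) := by
        intro h'
        rw [hcu i h'] at h
        exact absurd h (by decide)
      obtain ⟨q, hqp, hqs, hqd⟩ := Nat.Prime.not_coprime_iff_dvd.1 hnc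
      obtain ⟨u, hu, hux⟩ := twist q hqp hqd
      refine ⟨u * (c * b i), by rw [jacobiSym.mul_left, hu, h]; rfl, ?_⟩
      have := (hux ((S i).val : ℤ) (by exact_mod_cast hqs)).mul_left (c * b i)
      have e : (u * (c * b i) - c * b i) * ((S i).val : ℤ) =
          c * b i * ((u - 1) * ((S i).val : ℤ)) := by ring
      rw [e]
      exact this
  choose a ha has using key
  refine ⟨fun i => (a i : ZMod n), fun i => ⟨?_, ?_⟩, ?_⟩
  · have := hJ' (a i) (by rw [ha i]; decide)
    obtain ⟨x, y, hxy⟩ := this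
    have h' := congrArg (Int.cast : ℤ → ZMod n) hxy
    push_cast at h'
    rw [ZMod.natCast_self, mul_zero, add_zero] at h'
    exact IsUnit.of_mul_eq_one_right _ h'
  · rw [ZMod.val_intCast, ← jacobiSym.mod_left]
    exact ha i
  · have hd : (n : ℤ) ∣ ∑ i, a i * ((S i).val : ℤ) := by
      have e : ∑ i, a i * ((S i).val : ℤ) =
          ∑ i, (a i - c * b i) * ((S i).val : ℤ) + c * ∑ i, b i * ((S i).val : ℤ) := by
        rw [Finset.mul_sum, ← Finset.sum_add_distrib]
        exact Finset.sum_congr rfl fun i _ => by ring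
      rw [e]
      exact dvd_add (Finset.dvd_sum fun i _ => has i) (hbs.mul_left _)
    have := (ZMod.intCast_zmod_eq_zero_iff_dvd _ n).2 hd
    push_cast at this
    simpa using this
end

section
/- Let n be odd with a unique prime divisor p' such that v_{p'}(n) = 2 and with v_q(n) = 1 for every other prime divisor q of n, and suppose every prime divisor of n is at least 7. Let A = S(n). If ω(n) ≠ 2, then D_A(n) = Ω(n) + 1. -/
open scoped BigOperators

namespace DavAux

lemma sq_image_card {q : ℕ} [Fact q.Prime] (x : ZMod q) (hx : x ≠ 0) :
    q - 1 ≤ 2 * ((Finset.univ.erase (0 : ZMod q)).image (fun u => x * u ^ 2)).card := by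
  have h := Finset.card_le_mul_card_image (f := fun u : ZMod q => x * u ^ 2)
    (Finset.univ.erase (0 : ZMod q)) 2 ?_
  · simpa [Finset.card_erase_of_mem, ZMod.card] using h
  · intro a ha
    obtain ⟨u, hu, rfl⟩ := Finset.mem_image.1 ha
    refine (Finset.card_le_card (t := {u, -u}) ?_).trans Finset.card_le_two
    intro v hv
    simp only [Finset.mem_filter] at hv
    have h2 : v ^ 2 = u ^ 2 := mul_left_cancel₀ hx hv.2
    simpa using sq_eq_sq_iff_eq_or_eq_neg.1 h2

open Pointwise in
lemma three_sq {q : ℕ} [Fact q.Prime] (h7 : 7 ≤ q) (x y z s : ZMod q)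
    (hx : x ≠ 0) (hy : y ≠ 0) (hz : z ≠ 0) :
    ∃ u v w : ZMod q, u ≠ 0 ∧ v ≠ 0 ∧ w ≠ 0 ∧ x * u ^ 2 + y * v ^ 2 + z * w ^ 2 = s := by
  set E := Finset.univ.erase (0 : ZMod q)
  set X := E.image (fun u => x * u ^ 2) with hX
  set Y := E.image (fun u => y * u ^ 2) with hY
  set Z := E.image (fun u => z * u ^ 2) with hZ
  have cX : q - 1 ≤ 2 * X.card := sq_image_card x hx
  have cY : q - 1 ≤ 2 * Y.card := sq_image_card y hy
  have cZ : q - 1 ≤ 2 * Z.card := sq_image_card z hz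
  have pr : q.Prime := Fact.out
  have nX : X.Nonempty := Finset.card_pos.1 (by omega)
  have nY : Y.Nonempty := Finset.card_pos.1 (by omega)
  have nZ : Z.Nonempty := Finset.card_pos.1 (by omega)
  have h1 := ZMod.cauchy_davenport pr nX nY
  have h2 := ZMod.cauchy_davenport pr (nX.add nY) nZ
  have hodd : q % 2 = 1 := by
    rcases pr.eq_two_or_odd with h | h <;> omega
  have h3 : q ≤ (X + Y + Z).card := by omega
  have h4 : X + Y + Z = Finset.univ := by
    apply Finset.eq_univ_of_card
    rw [ZMod.card]
    refine le_antisymm ?_ h3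
    simpa [ZMod.card] using Finset.card_le_univ (X + Y + Z)
  have hs : s ∈ X + Y + Z := by rw [h4]; simp
  obtain ⟨a, ha, b, hb, rfl⟩ := Finset.mem_add.1 hs
  obtain ⟨c, hc, d, hd, rfl⟩ := Finset.mem_add.1 ha
  obtain ⟨u, hu, rfl⟩ := Finset.mem_image.1 hc
  obtain ⟨v, hv, rfl⟩ := Finset.mem_image.1 hd
  obtain ⟨w, hw, rfl⟩ := Finset.mem_image.1 hb
  exact ⟨u, v, w, by simpa [E] using hu, by simpa [E] using hv, by simpa [E] using hw, rfl⟩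

lemma jac_ne_zero {q : ℕ} (hq : q.Prime) (a : ℤ) : jacobiSym a q ≠ 0 ↔ ¬ (q : ℤ) ∣ a := by
  have : Fact q.Prime := ⟨hq⟩
  rw [← jacobiSym.legendreSym.to_jacobiSym, Ne, legendreSym.eq_zero_iff,
    ZMod.intCast_zmod_eq_zero_iff_dvd]

lemma jac_pm {q : ℕ} (hq : q.Prime) (a : ℤ) (h : ¬ (q : ℤ) ∣ a) :
    jacobiSym a q = 1 ∨ jacobiSym a q = -1 := by
  rcases jacobiSym.trichotomy a q with h1 | h1
  · exact absurd h1 ((jac_ne_zero hq a).2 h)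
  · exact h1

lemma exists_sign {q : ℕ} (hq : q.Prime) (h7 : 7 ≤ q) (e : ℤ) (he : e = 1 ∨ e = -1) :
    ∃ c : ℤ, jacobiSym c q = e := by
  have : Fact q.Prime := ⟨hq⟩
  rcases he with rfl | rfl
  · exact ⟨1, jacobiSym.one_left q⟩
  · obtain ⟨a, ha⟩ := FiniteField.exists_nonsquare (F := ZMod q) (by rw [ZMod.ringChar_zmod_n]; omega)
    refine ⟨a.val, ?_⟩
    rw [← jacobiSym.legendreSym.to_jacobiSym, legendreSym.eq_neg_one_iff]
    simpa using ha

lemma jac_congr {q : ℕ} {a b : ℤ} (h : (q : ℤ) ∣ a - b) : jacobiSym a q = jacobiSym b q :=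
  jacobiSym.mod_left' (Int.modEq_iff_dvd.2 h).symm

/-- every sign pattern is realised when three terms are coprime to `q` -/
lemma full_three {ι : Type*} [DecidableEq ι] {q : ℕ} (hq : q.Prime) (h7 : 7 ≤ q)
    (I : Finset ι) (x : ι → ℤ) (i j k : ι) (hi : i ∈ I) (hj : j ∈ I) (hk : k ∈ I)
    (hij : i ≠ j) (hik : i ≠ k) (hjk : j ≠ k)
    (xi : ¬ (q : ℤ) ∣ x i) (xj : ¬ (q : ℤ) ∣ x j) (xk : ¬ (q : ℤ) ∣ x k)
    (e : ι → ℤ) (he : ∀ t ∈ I, e t = 1 ∨ e t = -1) :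
    ∃ b : ι → ℤ, (∀ t ∈ I, jacobiSym (b t) q = e t) ∧ (q : ℤ) ∣ ∑ t ∈ I, b t * x t := by
  have : Fact q.Prime := ⟨hq⟩
  have h0 : ∀ t, ∃ c : ℤ, t ∈ I → jacobiSym c q = e t := by
    intro t
    by_cases ht : t ∈ I
    · obtain ⟨c, hc⟩ := exists_sign hq h7 (e t) (he t ht)
      exact ⟨c, fun _ => hc⟩
    · exact ⟨0, fun h => absurd h ht⟩
  choose c hc using h0
  have hne : ∀ t ∈ I, ¬ (q : ℤ) ∣ x t → ((c t * x t : ℤ) : ZMod q) ≠ 0 := by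
    intro t ht hx h
    rw [ZMod.intCast_zmod_eq_zero_iff_dvd] at h
    rcases (Nat.prime_iff_prime_int.1 hq).dvd_or_dvd h with h | h
    · refine (jac_ne_zero hq (c t)).1 ?_ h
      rw [hc t ht]; rcases he t ht with h | h <;> rw [h] <;> norm_num
    · exact hx h
  obtain ⟨u, v, w, hu, hv, hw, h⟩ := three_sq h7 _ _ _
    (-∑ t ∈ ((I.erase i).erase j).erase k, ((c t * x t : ℤ) : ZMod q))
    (hne i hi xi) (hne j hj xj) (hne k hk xk)
  let f : ι → ZMod q := fun t => if t = i then u else if t = j then v else if t = k then w else 1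
  have hf : ∀ t, f t ≠ 0 := by
    intro t; simp only [f]; split_ifs <;> simp [*]
  refine ⟨fun t => c t * ((f t).val : ℤ) ^ 2, ?_, ?_⟩
  · intro t ht
    rw [jacobiSym.mul_left, hc t ht, jacobiSym.sq_one', mul_one]
    have := ZMod.val_coe_unit_coprime (Units.mk0 (f t) (hf t))
    rw [Int.gcd_natCast_natCast]
    exact this
  · rw [← ZMod.intCast_zmod_eq_zero_iff_dvd]
    push_cast
    have hj' : j ∈ I.erase i := by simp [hj, hij.symm]
    have hk' : k ∈ (I.erase i).erase j := by simp [hk, hik.symm, hjk.symm]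
    rw [← Finset.add_sum_erase I _ hi, ← Finset.add_sum_erase _ _ hj',
      ← Finset.add_sum_erase _ _ hk']
    have e1 : ∑ t ∈ ((I.erase i).erase j).erase k, (c t : ZMod q) * ((f t).val : ZMod q) ^ 2 * x t
        = ∑ t ∈ ((I.erase i).erase j).erase k, ((c t * x t : ℤ) : ZMod q) := by
      apply Finset.sum_congr rfl
      intro t ht
      simp only [Finset.mem_erase] at ht
      simp [f, ht.1, ht.2.1, ht.2.2.1]
    rw [e1, eq_neg_iff_add_eq_zero.1 h |>.symm]
    simp [f, hij.symm, hik.symm, hjk.symm]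
    ring

/-- sign pattern off `k` is realised when two terms are coprime to `q` -/
lemma flip_lemma {ι : Type*} [DecidableEq ι] {q : ℕ} (hq : q.Prime) (h7 : 7 ≤ q) (v : ℕ)
    (I : Finset ι) (x : ι → ℤ) (k l : ι) (hk : k ∈ I) (hl : l ∈ I) (hkl : l ≠ k) 
    (xk : ¬ (q : ℤ) ∣ x k) (xl : ¬ (q : ℤ) ∣ x l)
    (e : ι → ℤ) (he : ∀ t ∈ I, e t = 1 ∨ e t = -1) :
    ∃ b : ι → ℤ, (∀ t ∈ I, t ≠ k → jacobiSym (b t) q = e t) ∧ (∀ t ∈ I, ¬ (q : ℤ) ∣ b t) ∧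
      (q : ℤ) ^ v ∣ ∑ t ∈ I, b t * x t := by
  have pq := Nat.prime_iff_prime_int.1 hq
  have h0 : ∀ t, ∃ c : ℤ, t ∈ I → jacobiSym c q = e t := by
    intro t
    by_cases ht : t ∈ I
    · obtain ⟨c, hc⟩ := exists_sign hq h7 (e t) (he t ht)
      exact ⟨c, fun _ => hc⟩
    · exact ⟨0, fun h => absurd h ht⟩
  choose c hc using h0
  have ndvd : ∀ t ∈ I, ∀ a : ℤ, jacobiSym a q = e t → ¬ (q : ℤ) ∣ a := by
    intro t ht a ha
    apply (jac_ne_zero hq a).1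
    rw [ha]; rcases he t ht with h | h <;> rw [h] <;> norm_num
  have h4 : jacobiSym 4 q = 1 := by
    have : (4 : ℤ) = 2 ^ 2 := by norm_num
    rw [this, jacobiSym.sq_one']
    have : Nat.Coprime 2 q := (Nat.coprime_primes Nat.prime_two hq).2 (by omega)
    exact_mod_cast this
  have h3 : ¬ (q : ℤ) ∣ 3 := by
    intro h
    have := Int.le_of_dvd (by norm_num) h
    omega
  have hl' : l ∈ I.erase k := by simp [hl, hkl]
  have step : ∃ d : ι → ℤ, (∀ t ∈ I, jacobiSym (d t) q = e t) ∧
      ¬ (q : ℤ) ∣ ∑ t ∈ I.erase k, d t * x t := by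
    by_cases hs : (q : ℤ) ∣ ∑ t ∈ I.erase k, c t * x t
    · refine ⟨Function.update c l (4 * c l), ?_, ?_⟩
      · intro t ht
        by_cases h : t = l
        · subst h; simp [jacobiSym.mul_left, h4, hc t ht]
        · simp [h, hc t ht]
      · intro h
        have e1 : ∑ t ∈ I.erase k, Function.update c l (4 * c l) t * x t
            = ∑ t ∈ I.erase k, c t * x t + 3 * (c l * x l) := by
          rw [← Finset.add_sum_erase _ _ hl', ← Finset.add_sum_erase _ (fun t => c t * x t) hl']
          have : ∑ t ∈ (I.erase k).erase l, Function.update c l (4 * c l) t * x t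
            = ∑ t ∈ (I.erase k).erase l, c t * x t := by
            apply Finset.sum_congr rfl
            intro t ht
            simp only [Finset.mem_erase] at ht
            simp [ht.1]
          rw [this]; simp; ring
        rw [e1] at h
        have h := (Int.dvd_iff_dvd_of_dvd_add h).1 hs
        rcases pq.dvd_or_dvd h with h | h
        · exact h3 h
        rcases pq.dvd_or_dvd h with h | h
        · exact ndvd l hl _ (hc l hl) h
        · exact xl h
    · exact ⟨c, fun t ht => hc t ht, hs⟩
  obtain ⟨d, hd, hds⟩ := step
  set s := ∑ t ∈ I.erase k, d t * x t with hs
  have cop : IsCoprime (x k) ((q : ℤ) ^ v) :=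
    (((Prime.coprime_iff_not_dvd pq).2 xk).symm).pow_right
  obtain ⟨a, b, hab⟩ := cop
  by_cases hv : v = 0
  · subst hv
    refine ⟨d, fun t ht _ => hd t ht, fun t ht => ndvd t ht _ (hd t ht), by simp⟩
  refine ⟨Function.update d k (-(a * s)), ?_, ?_, ?_⟩
  · intro t ht htk; simp [htk, hd t ht]
  · intro t ht
    by_cases h : t = k
    · subst h
      simp only [Function.update_self, dvd_neg]
      intro h
      rcases pq.dvd_or_dvd h with h | h
      · have : (q : ℤ) ∣ 1 := by
          rw [← hab]
          exact dvd_add (h.mul_right _) ((dvd_pow_self _ hv).mul_left _)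
        exact pq.not_dvd_one this
      · exact hds h
    · simpa [h] using ndvd t ht _ (hd t ht)
  · rw [← Finset.add_sum_erase _ _ hk]
    have : ∑ t ∈ I.erase k, Function.update d k (-(a * s)) t * x t = s := by
      apply Finset.sum_congr rfl
      intro t ht
      simp only [Finset.mem_erase] at ht
      simp [ht.1]
    rw [this]
    refine ⟨b * s, ?_⟩
    simp only [Function.update_self]
    linear_combination (-s) * hab

lemma prune {ι : Type*} [DecidableEq ι] (x : ι → ℤ) (T : Finset ℕ) : ∀ I : Finset ι,
    ∃ J ⊆ I, (∀ N ∈ T, (J.filter (fun i => ¬ (N : ℤ) ∣ x i)).card ≠ 1) ∧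
      I.card ≤ J.card + (T.filter (fun N : ℕ => ∀ i ∈ J, (N : ℤ) ∣ x i)).card := by
  classical
  induction T using Finset.strongInduction with
  | H T ih =>
    intro I
    by_cases h : ∀ N ∈ T, (I.filter (fun i => ¬ (N : ℤ) ∣ x i)).card ≠ 1
    · exact ⟨I, subset_rfl, h, by omega⟩
    · push Not at h
      obtain ⟨N, hN, h1⟩ := h
      obtain ⟨i, hi⟩ := Finset.card_eq_one.1 h1
      have hiI : i ∈ I := by
        have : i ∈ I.filter (fun i => ¬ (N : ℤ) ∣ x i) := by rw [hi]; simp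
        exact (Finset.mem_filter.1 this).1
      obtain ⟨J, hJ, hJT, hc⟩ := ih (T.erase N) (Finset.erase_ssubset hN) (I.erase i)
      have hNJ : ∀ j ∈ J, (N : ℤ) ∣ x j := by
        intro j hj
        by_contra hcon
        have hj' := Finset.mem_erase.1 (hJ hj)
        have : j ∈ I.filter (fun i => ¬ (N : ℤ) ∣ x i) := Finset.mem_filter.2 ⟨hj'.2, hcon⟩
        rw [hi, Finset.mem_singleton] at this
        exact hj'.1 this
      refine ⟨J, hJ.trans (Finset.erase_subset _ _), ?_, ?_⟩
      · intro M hM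
        by_cases hMN : M = N
        · subst hMN
          rw [Finset.filter_false_of_mem (by simpa using hNJ)]
          simp
        · exact hJT M (Finset.mem_erase.2 ⟨hMN, hM⟩)
      · rw [Finset.filter_erase, Finset.card_erase_of_mem (Finset.mem_filter.2 ⟨hN, hNJ⟩),
          Finset.card_erase_of_mem hiI] at hc
        have : 0 < (T.filter (fun N : ℕ => ∀ i ∈ J, (N : ℤ) ∣ x i)).card :=
          Finset.card_pos.2 ⟨N, Finset.mem_filter.2 ⟨hN, hNJ⟩⟩
        have : 0 < I.card := Finset.card_pos.2 ⟨i, hiI⟩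
        omega

lemma two_of_card {ι : Type*} [DecidableEq ι] (I : Finset ι) (P : ι → Prop) [DecidablePred P]
    (h1 : (I.filter P).card ≠ 1) (k : ι) (hk : k ∈ I) (hP : P k) : ∃ l ∈ I, l ≠ k ∧ P l := by
  have hm : k ∈ I.filter P := Finset.mem_filter.2 ⟨hk, hP⟩
  have h0 : 0 < (I.filter P).card := Finset.card_pos.2 ⟨k, hm⟩
  obtain ⟨l, hl, hlk⟩ := Finset.exists_mem_ne (by omega : 1 < (I.filter P).card) k
  exact ⟨l, (Finset.mem_filter.1 hl).1, hlk, (Finset.mem_filter.1 hl).2⟩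

lemma base_q {ι : Type*} [DecidableEq ι] {q : ℕ} (hq : q.Prime) (h7 : 7 ≤ q)
    (I : Finset ι) (x : ι → ℤ) (h1 : (I.filter (fun i => ¬ (q : ℤ) ∣ x i)).card ≠ 1) :
    ∃ b : ι → ℤ, (∀ t ∈ I, ¬ (q : ℤ) ∣ b t) ∧ (q : ℤ) ∣ ∑ t ∈ I, b t * x t := by
  by_cases h0 : ∀ t ∈ I, (q : ℤ) ∣ x t
  · refine ⟨fun _ => 1, fun t _ => (Nat.prime_iff_prime_int.1 hq).not_dvd_one, ?_⟩
    exact Finset.dvd_sum fun t ht => (h0 t ht).mul_left _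
  · push Not at h0
    obtain ⟨k, hk, xk⟩ := h0
    obtain ⟨l, hl, hlk, xl⟩ := two_of_card I _ h1 k hk xk
    obtain ⟨b, -, hb, hs⟩ := flip_lemma hq h7 1 I x k l hk hl hlk xk xl (fun _ => 1) (by simp)
    exact ⟨b, hb, by simpa using hs⟩

lemma base_p {ι : Type*} [DecidableEq ι] {q : ℕ} (hq : q.Prime) (h7 : 7 ≤ q)
    (I : Finset ι) (x : ι → ℤ) (h1 : (I.filter (fun i => ¬ (q : ℤ) ∣ x i)).card ≠ 1)
    (h2 : (I.filter (fun i => ¬ ((q ^ 2 : ℕ) : ℤ) ∣ x i)).card ≠ 1) :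
    ∃ b : ι → ℤ, (∀ t ∈ I, ¬ (q : ℤ) ∣ b t) ∧ (q : ℤ) ^ 2 ∣ ∑ t ∈ I, b t * x t := by
  by_cases h0 : ∀ t ∈ I, (q : ℤ) ∣ x t
  · have hq0 : (q : ℤ) ≠ 0 := by exact_mod_cast hq.ne_zero
    have hy : ∀ t ∈ I, x t = q * (x t / q) := fun t ht => (Int.mul_ediv_cancel' (h0 t ht)).symm
    have hf : I.filter (fun i => ¬ (q : ℤ) ∣ x i / q) =
        I.filter (fun i => ¬ ((q ^ 2 : ℕ) : ℤ) ∣ x i) := by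
      apply Finset.filter_congr
      intro t ht
      rw [not_iff_not]
      conv_rhs => rw [hy t ht]
      push_cast
      rw [pow_two, mul_dvd_mul_iff_left hq0]
    obtain ⟨b, hb, hs⟩ := base_q hq h7 I (fun t => x t / q) (by rw [hf]; exact h2)
    refine ⟨b, hb, ?_⟩
    have : ∑ t ∈ I, b t * x t = q * ∑ t ∈ I, b t * (x t / q) := by
      rw [Finset.mul_sum]
      apply Finset.sum_congr rfl
      intro t ht
      conv_lhs => rw [hy t ht]
      ring
    rw [this, pow_two]
    exact mul_dvd_mul_left _ hs
  · push Not at h0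
    obtain ⟨k, hk, xk⟩ := h0
    obtain ⟨l, hl, hlk, xl⟩ := two_of_card I _ h1 k hk xk
    obtain ⟨b, -, hb, hs⟩ := flip_lemma hq h7 2 I x k l hk hl hlk xk xl (fun _ => 1) (by simp)
    exact ⟨b, hb, hs⟩

lemma full_ne_two {ι : Type*} [DecidableEq ι] {q : ℕ} (hq : q.Prime) (h7 : 7 ≤ q)
    (I : Finset ι) (x : ι → ℤ) (h1 : (I.filter (fun i => ¬ (q : ℤ) ∣ x i)).card ≠ 1)
    (h2 : (I.filter (fun i => ¬ (q : ℤ) ∣ x i)).card ≠ 2)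
    (e : ι → ℤ) (he : ∀ t ∈ I, e t = 1 ∨ e t = -1) :
    ∃ b : ι → ℤ, (∀ t ∈ I, jacobiSym (b t) q = e t) ∧ (q : ℤ) ∣ ∑ t ∈ I, b t * x t := by
  by_cases h0 : (I.filter (fun i => ¬ (q : ℤ) ∣ x i)).card = 0
  · have h0' : ∀ t ∈ I, (q : ℤ) ∣ x t := by
      intro t ht
      by_contra hcon
      have : t ∈ I.filter (fun i => ¬ (q : ℤ) ∣ x i) := Finset.mem_filter.2 ⟨ht, hcon⟩
      rw [Finset.card_eq_zero.1 h0] at this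
      simp at this
    have h : ∀ t, ∃ c : ℤ, t ∈ I → jacobiSym c q = e t := by
      intro t
      by_cases ht : t ∈ I
      · obtain ⟨c, hc⟩ := exists_sign hq h7 (e t) (he t ht)
        exact ⟨c, fun _ => hc⟩
      · exact ⟨0, fun h => absurd h ht⟩
    choose c hc using h
    exact ⟨c, hc, Finset.dvd_sum fun t ht => (h0' t ht).mul_left _⟩
  · obtain ⟨i, j, k, hi, hj, hk, hij, hik, hjk⟩ := Finset.two_lt_card_iff.1
      (by omega : 2 < (I.filter (fun i => ¬ (q : ℤ) ∣ x i)).card)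
    simp only [Finset.mem_filter] at hi hj hk
    exact full_three hq h7 I x i j k hi.1 hj.1 hk.1 hij hik hjk hi.2 hj.2 hk.2 e he

lemma prod_pm {α : Type*} (s : Finset α) (f : α → ℤ) (h : ∀ a ∈ s, f a = 1 ∨ f a = -1) :
    (∏ a ∈ s, f a) = 1 ∨ (∏ a ∈ s, f a) = -1 := by
  have : IsUnit (∏ a ∈ s, f a) := by
    rw [IsUnit.prod_iff]
    exact fun a ha => Int.isUnit_iff.2 (h a ha)
  exact Int.isUnit_iff.1 this

lemma pm_sq {e : ℤ} (h : e = 1 ∨ e = -1) : e * e = 1 := by rcases h with rfl | rfl <;> norm_num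

lemma good {ι : Type*} [DecidableEq ι] (M : Finset ℕ) (hM : ∀ q ∈ M, q.Prime ∧ 7 ≤ q)
    (I : Finset ι) (x : ι → ℤ)
    (h1 : ∀ q ∈ M, (I.filter (fun i => ¬ (q : ℤ) ∣ x i)).card ≠ 1)
    (hc : M = ∅ ∨ (∃ q₁ ∈ M, ∃ q₂ ∈ M, ∃ k ∈ I, ¬ (q₁ : ℤ) ∣ x k ∧ (q₂ : ℤ) ∣ x k) ∨
      ∃ q ∈ M, (I.filter (fun i => ¬ (q : ℤ) ∣ x i)).card ≠ 2) :
    ∃ b : ℕ → ι → ℤ, (∀ q ∈ M, (∀ t ∈ I, ¬ (q : ℤ) ∣ b q t) ∧ (q : ℤ) ∣ ∑ t ∈ I, b q t * x t) ∧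
      ∀ t ∈ I, ∏ q ∈ M, jacobiSym (b q t) q = 1 := by
  have hb : ∀ q, ∃ b : ι → ℤ, q ∈ M →
      (∀ t ∈ I, ¬ (q : ℤ) ∣ b t) ∧ (q : ℤ) ∣ ∑ t ∈ I, b t * x t := by
    intro q
    by_cases hq : q ∈ M
    · obtain ⟨b, h⟩ := base_q (hM q hq).1 (hM q hq).2 I x (h1 q hq)
      exact ⟨b, fun _ => h⟩
    · exact ⟨0, fun h => absurd h hq⟩
  choose b hb using hb
  have hpm : ∀ q ∈ M, ∀ t ∈ I, jacobiSym (b q t) q = 1 ∨ jacobiSym (b q t) q = -1 :=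
    fun q hq t ht => jac_pm (hM q hq).1 _ ((hb q hq).1 t ht)
  have ndvd : ∀ q ∈ M, ∀ a : ℤ, (jacobiSym a q = 1 ∨ jacobiSym a q = -1) → ¬ (q : ℤ) ∣ a := by
    intro q hq a ha
    apply (jac_ne_zero (hM q hq).1 a).1
    rcases ha with h | h <;> rw [h] <;> norm_num
  rcases hc with rfl | ⟨q₁, hq₁, q₂, hq₂, k, hk, xk₁, xk₂⟩ | ⟨q, hq, h2⟩
  · exact ⟨b, by simp, by simp⟩
  · have hne : q₁ ≠ q₂ := by rintro rfl; exact xk₁ xk₂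
    have hq₂' : q₂ ∈ M.erase q₁ := Finset.mem_erase.2 ⟨hne.symm, hq₂⟩
    set e : ι → ℤ := fun t => ∏ q ∈ M.erase q₁, jacobiSym (b q t) q with he
    have hepm : ∀ t ∈ I, e t = 1 ∨ e t = -1 := fun t ht =>
      prod_pm _ _ fun q hq => hpm q (Finset.mem_of_mem_erase hq) t ht
    obtain ⟨l, hl, hlk, xl⟩ := two_of_card I _ (h1 q₁ hq₁) k hk xk₁
    obtain ⟨c, hc1, hc2, hc3⟩ := flip_lemma (hM q₁ hq₁).1 (hM q₁ hq₁).2 1 I x k l hk hl hlk xk₁ xl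
      e hepm
    have hck := jac_pm (hM q₁ hq₁).1 _ (hc2 k hk)
    set r := ∏ q ∈ (M.erase q₁).erase q₂, jacobiSym (b q k) q with hr
    have hrpm : r = 1 ∨ r = -1 := 
      prod_pm _ _ fun q hq => hpm q (Finset.mem_of_mem_erase (Finset.mem_of_mem_erase hq)) k hk
    have hrc : jacobiSym (c k) q₁ * r = 1 ∨ jacobiSym (c k) q₁ * r = -1 := by
      rcases hck with h | h <;> rcases hrpm with h' | h' <;> rw [h, h'] <;> norm_num
    obtain ⟨d, hd⟩ := exists_sign (hM q₂ hq₂).1 (hM q₂ hq₂).2 _ hrc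
    let b' : ℕ → ι → ℤ := Function.update (Function.update b q₂ (Function.update (b q₂) k d)) q₁ c
    have hb'1 : b' q₁ = c := by simp [b']
    have hb'2 : b' q₂ = Function.update (b q₂) k d := by simp [b', hne.symm]
    have hb'3 : ∀ q, q ≠ q₁ → q ≠ q₂ → b' q = b q := by intro q h h'; simp [b', h, h']
    refine ⟨b', ?_, ?_⟩
    · intro q hq
      by_cases e1 : q = q₁
      · subst e1; rw [hb'1]; exact ⟨hc2, by simpa using hc3⟩
      by_cases e2 : q = q₂
      · subst e2
        rw [hb'2]
        constructor
        · intro t ht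
          by_cases htk : t = k
          · subst htk
            rw [Function.update_self]
            exact ndvd q hq _ (by rw [hd]; exact hrc)
          · rw [Function.update_of_ne htk]; exact (hb q hq).1 t ht
        · have := (hb q hq).2
          rw [← Finset.add_sum_erase _ _ hk] at this ⊢
          have e3 : ∑ t ∈ I.erase k, Function.update (b q) k d t * x t
              = ∑ t ∈ I.erase k, b q t * x t := by
            apply Finset.sum_congr rfl
            intro t ht
            rw [Function.update_of_ne (Finset.ne_of_mem_erase ht)]
          rw [e3]
          exact dvd_add (xk₂.mul_left _) ((Int.dvd_iff_dvd_of_dvd_add this).1 (xk₂.mul_left _))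
      · rw [hb'3 q e1 e2]; exact hb q hq
    · intro t ht
      rw [← Finset.mul_prod_erase _ _ hq₁, ← Finset.mul_prod_erase _ _ hq₂', hb'1, hb'2]
      have e3 : ∏ q ∈ (M.erase q₁).erase q₂, jacobiSym (b' q t) q
          = ∏ q ∈ (M.erase q₁).erase q₂, jacobiSym (b q t) q := by
        apply Finset.prod_congr rfl
        intro q hq
        simp only [Finset.mem_erase] at hq
        rw [hb'3 q hq.2.1 hq.1]
      rw [e3]
      by_cases htk : t = k
      · subst htk
        rw [Function.update_self, hd, ← hr]
        linear_combination pm_sq hrc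
      · rw [Function.update_of_ne htk, hc1 t ht htk,
          Finset.mul_prod_erase _ (fun q => jacobiSym (b q t) q) hq₂']
        exact pm_sq (hepm t ht)
  · have hepm : ∀ t ∈ I, (∏ q ∈ M.erase q, jacobiSym (b q t) q) = 1 ∨
        (∏ q ∈ M.erase q, jacobiSym (b q t) q) = -1 := fun t ht =>
      prod_pm _ _ fun q hq => hpm q (Finset.mem_of_mem_erase hq) t ht
    obtain ⟨c, hc1, hc2⟩ := full_ne_two (hM q hq).1 (hM q hq).2 I x (h1 q hq) h2
      (fun t => ∏ q ∈ M.erase q, jacobiSym (b q t) q) hepm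
    refine ⟨Function.update b q c, ?_, ?_⟩
    · intro q' hq'
      by_cases e1 : q' = q
      · subst e1
        rw [Function.update_self]
        exact ⟨fun t ht => ndvd q' hq' _ (by rw [hc1 t ht]; exact hepm t ht), hc2⟩
      · rw [Function.update_of_ne e1]; exact hb q' hq'
    · intro t ht
      rw [← Finset.mul_prod_erase _ _ hq, Function.update_self, hc1 t ht]
      have e3 : ∏ q' ∈ M.erase q, jacobiSym (Function.update b q c q' t) q'
          = ∏ q' ∈ M.erase q, jacobiSym (b q' t) q' := by
        apply Finset.prod_congr rfl
        intro q' hq'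
        rw [Function.update_of_ne (Finset.ne_of_mem_erase hq')]
      rw [e3]
      exact pm_sq (hepm t ht)

lemma crt (s : Finset ℕ) (f : ℕ → ℕ) (hf0 : ∀ q ∈ s, f q ≠ 0)
    (hf : Set.Pairwise (s : Set ℕ) (Function.onFun Nat.Coprime f)) (c : ℕ → ℤ) :
    ∃ a : ℤ, ∀ q ∈ s, (f q : ℤ) ∣ a - c q := by
  let r := Nat.chineseRemainderOfFinset (fun q => (c q % f q).toNat) f s hf0 hf
  refine ⟨(r : ℕ), fun q hq => ?_⟩
  have h := r.2 q hq
  have h0 : (f q : ℤ) ≠ 0 := by exact_mod_cast hf0 q hq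
  have h2 : ((r : ℕ) : ℤ) ≡ ((c q % f q).toNat : ℤ) [ZMOD f q] := Int.natCast_modEq_iff.2 h
  rw [Int.toNat_of_nonneg (Int.emod_nonneg _ h0)] at h2
  exact (h2.trans (Int.mod_modEq _ _)).symm.dvd

lemma jac_prod (a : ℤ) (s : Finset ℕ) (f : ℕ → ℕ) (hf : ∀ q ∈ s, f q ≠ 0) :
    jacobiSym a (∏ q ∈ s, f q) = ∏ q ∈ s, jacobiSym a (f q) := by
  induction s using Finset.induction_on with
  | empty => simp
  | insert q s hq ih =>
    rw [Finset.prod_insert hq, Finset.prod_insert hq, jacobiSym.mul_right',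
      ih fun t ht => hf t (Finset.mem_insert_of_mem ht)]
    · exact hf q (Finset.mem_insert_self _ _)
    · exact Finset.prod_ne_zero_iff.2 fun t ht => hf t (Finset.mem_insert_of_mem ht)

lemma prune_set {ι : Type*} [DecidableEq ι] (x : ι → ℤ) (T : Finset ℕ) (I : Finset ι) :
    ∃ J ⊆ I, (∀ N ∈ T, (J.filter (fun i => ¬ (N : ℤ) ∣ x i)).card ≠ 1) ∧
      ∃ K ⊆ T, (∀ N ∈ K, ∀ i ∈ J, (N : ℤ) ∣ x i) ∧ I.card ≤ J.card + K.card := by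
  obtain ⟨J, h1, h2, h3⟩ := prune x T I
  exact ⟨J, h1, h2, _, Finset.filter_subset _ _, fun N hN => (Finset.mem_filter.1 hN).2, h3⟩

lemma finish {n p : ℕ} (hn0 : n ≠ 0) (hp : p.Prime) (hpn : p ∣ n) (hv : n.factorization p = 2)
    (hq : ∀ q : ℕ, q.Prime → q ∣ n → q ≠ p → n.factorization q = 1)
    (hp7 : ∀ p : ℕ, p.Prime → p ∣ n → 7 ≤ p)
    {l : ℕ} (S : Fin l → ZMod n) (I : Finset (Fin l)) (hI : I.Nonempty)
    (x : Fin l → ℤ) (hx : ∀ i, ((x i : ℤ) : ZMod n) = S i)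
    (h1 : ∀ q ∈ n.primeFactors, (I.filter (fun i => ¬ (q : ℤ) ∣ x i)).card ≠ 1)
    (h2 : (I.filter (fun i => ¬ ((p ^ 2 : ℕ) : ℤ) ∣ x i)).card ≠ 1)
    (hc : n.primeFactors.erase p = ∅ ∨
      (∃ q₁ ∈ n.primeFactors.erase p, ∃ q₂ ∈ n.primeFactors.erase p, ∃ k ∈ I,
        ¬ (q₁ : ℤ) ∣ x k ∧ (q₂ : ℤ) ∣ x k) ∨
      ∃ q ∈ n.primeFactors.erase p, (I.filter (fun i => ¬ (q : ℤ) ∣ x i)).card ≠ 2) :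
    HasWZSSub (JSet n) S := by
  have : NeZero n := ⟨hn0⟩
  have hpm : p ∈ n.primeFactors := Nat.mem_primeFactors.2 ⟨hp, hpn, hn0⟩
  obtain ⟨b, hb, hbs⟩ := good (n.primeFactors.erase p)
    (fun q hq => by
      have := Nat.mem_primeFactors.1 (Finset.mem_of_mem_erase hq)
      exact ⟨this.1, hp7 q this.1 this.2.1⟩) I x
    (fun q hq => h1 q (Finset.mem_of_mem_erase hq)) hc
  obtain ⟨c, hc1, hc2⟩ := base_p hp (hp7 p hp hpn) I x (h1 p hpm) h2
  let d : ℕ → Fin l → ℤ := Function.update b p c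
  have hnprod : ∏ q ∈ n.primeFactors, q ^ n.factorization q = n :=
    Nat.prod_factorization_pow_eq_self hn0
  have hcop : Set.Pairwise (n.primeFactors : Set ℕ)
      (Function.onFun Nat.Coprime (fun q => q ^ n.factorization q)) := by
    intro q hq r hr hqr
    exact Nat.Coprime.pow _ _ ((Nat.coprime_primes (Nat.prime_of_mem_primeFactors hq)
      (Nat.prime_of_mem_primeFactors hr)).2 hqr)
  have hne : ∀ q ∈ n.primeFactors, q ^ n.factorization q ≠ 0 := fun q hq =>
    pow_ne_zero _ (Nat.prime_of_mem_primeFactors hq).ne_zero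
  have hcrt : ∀ t, ∃ a : ℤ, ∀ q ∈ n.primeFactors, ((q ^ n.factorization q : ℕ) : ℤ) ∣ a - d q t :=
    fun t => crt n.primeFactors _ hne hcop (fun q => d q t)
  choose a ha using hcrt
  have hvq : ∀ q ∈ n.primeFactors.erase p, n.factorization q = 1 := by
    intro q hq'
    have h := Nat.mem_primeFactors.1 (Finset.mem_of_mem_erase hq')
    exact hq q h.1 h.2.1 (Finset.ne_of_mem_erase hq')
  have hJ : ∀ t ∈ I, jacobiSym (a t) n = 1 := by
    intro t ht
    conv_lhs => rw [← hnprod]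
    rw [jac_prod _ _ _ hne, ← Finset.mul_prod_erase _ _ hpm, hv, jacobiSym.pow_right]
    have e1 : jacobiSym (a t) p = 1 ∨ jacobiSym (a t) p = -1 := by
      have h := ha t p hpm
      rw [hv] at h
      have h' : (p : ℤ) ∣ a t - d p t := dvd_trans (by push_cast; exact dvd_pow_self _ two_ne_zero) h
      rw [jac_congr h']
      apply jac_pm hp
      simpa [d] using hc1 t ht
    have e2 : ∏ q ∈ n.primeFactors.erase p, jacobiSym (a t) (q ^ n.factorization q)
        = ∏ q ∈ n.primeFactors.erase p, jacobiSym (b q t) q := by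
      apply Finset.prod_congr rfl
      intro q hq'
      have h := ha t q (Finset.mem_of_mem_erase hq')
      rw [hvq q hq', pow_one] at h ⊢
      rw [jac_congr h]
      simp [d, Finset.ne_of_mem_erase hq']
    rw [e2, hbs t ht, pow_two, pm_sq e1, mul_one]
  have hdiv : ∀ q ∈ n.primeFactors, ((q ^ n.factorization q : ℕ) : ℤ) ∣ ∑ t ∈ I, a t * x t := by
    intro q hq'
    have e1 : ((q ^ n.factorization q : ℕ) : ℤ) ∣ ∑ t ∈ I, d q t * x t := by
      by_cases hqp : q = p
      · subst hqp
        rw [hv]; simpa [d] using hc2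
      · have hm := Finset.mem_erase.2 ⟨hqp, hq'⟩
        rw [hvq q hm, pow_one]
        simpa [d, hqp] using (hb q hm).2
    have e2 : ∑ t ∈ I, a t * x t = ∑ t ∈ I, (a t - d q t) * x t + ∑ t ∈ I, d q t * x t := by
      rw [← Finset.sum_add_distrib]
      exact Finset.sum_congr rfl fun t _ => by ring
    rw [e2]
    exact dvd_add (Finset.dvd_sum fun t _ => (ha t q hq').mul_right _) e1
  have hndiv : (n : ℤ) ∣ ∑ t ∈ I, a t * x t := by
    conv_lhs => rw [← hnprod]
    push_cast
    apply Finset.prod_dvd_of_coprime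
    · intro q hq' r hr hqr
      have := hcop hq' hr hqr
      have h := Nat.isCoprime_iff_coprime.2 this
      simpa [Function.onFun] using h
    · intro q hq'
      simpa using hdiv q hq'
  refine ⟨I, hI, fun t => (a t : ZMod n), ?_, ?_⟩
  · intro t ht
    constructor
    · rw [ZMod.coe_int_isUnit_iff_isCoprime, isCoprime_comm, Int.isCoprime_iff_gcd_eq_one]
      by_contra hcon
      have := jacobiSym.eq_zero_iff_not_coprime.2 hcon
      rw [hJ t ht] at this
      norm_num at this
    · rw [ZMod.val_intCast, ← jacobiSym.mod_left]
      exact hJ t ht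
  · rw [← ZMod.intCast_zmod_eq_zero_iff_dvd] at hndiv
    rw [← hndiv]
    push_cast
    exact Finset.sum_congr rfl fun t _ => by rw [hx]

lemma upper {n p : ℕ} (hn0 : n ≠ 0) (hp : p.Prime) (hpn : p ∣ n) (hv : n.factorization p = 2)
    (hq : ∀ q : ℕ, q.Prime → q ∣ n → q ≠ p → n.factorization q = 1)
    (hp7 : ∀ p : ℕ, p.Prime → p ∣ n → 7 ≤ p) (homega : n.primeFactors.card ≠ 2)
    (S : Fin (n.primeFactors.card + 2) → ZMod n) :
    HasWZSSub (JSet n) S := by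
  have : NeZero n := ⟨hn0⟩
  have hpm : p ∈ n.primeFactors := Nat.mem_primeFactors.2 ⟨hp, hpn, hn0⟩
  set M := n.primeFactors.erase p with hM
  have hMc : M.card + 1 = n.primeFactors.card := Finset.card_erase_add_one hpm
  let x : Fin (n.primeFactors.card + 2) → ℤ := fun i => ((S i).val : ℤ)
  have hx : ∀ i, ((x i : ℤ) : ZMod n) = S i := by intro i; simp [x]
  have hp2 : p ^ 2 ∉ n.primeFactors := by
    intro h
    exact Nat.Prime.not_prime_pow le_rfl (Nat.prime_of_mem_primeFactors h)
  obtain ⟨J, -, hJ, K, hKT, hKd, hJc⟩ := prune_set x (insert (p ^ 2) n.primeFactors) Finset.univ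
  rw [Finset.card_univ, Fintype.card_fin] at hJc
  have hTc : (insert (p ^ 2) n.primeFactors).card = n.primeFactors.card + 1 :=
    Finset.card_insert_of_notMem hp2
  have hJne : J.Nonempty := by
    apply Finset.card_pos.1
    have := Finset.card_le_card hKT
    omega
  by_cases hc : M = ∅ ∨
      (∃ q₁ ∈ M, ∃ q₂ ∈ M, ∃ k ∈ J, ¬ (q₁ : ℤ) ∣ x k ∧ (q₂ : ℤ) ∣ x k) ∨
      ∃ q ∈ M, (J.filter (fun i => ¬ (q : ℤ) ∣ x i)).card ≠ 2
  · exact finish hn0 hp hpn hv hq hp7 S J hJne x hx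
      (fun q hq => hJ q (Finset.mem_insert_of_mem hq)) (hJ _ (Finset.mem_insert_self _ _)) hc
  push Not at hc
  obtain ⟨hMne, hsame, htwo⟩ := hc
  obtain ⟨q₀, hq₀⟩ := hMne
  have hM2 : 2 ≤ M.card := by
    have : 0 < M.card := Finset.card_pos.2 ⟨q₀, hq₀⟩
    omega
  set O := J.filter (fun i => (q₀ : ℤ) ∣ x i) with hO
  have hOc : O.card + 2 = J.card := by
    have h := htwo q₀ hq₀
    have h' : O.card + (J.filter (fun i => ¬ (q₀ : ℤ) ∣ x i)).card = J.card := by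
      convert Finset.card_filter_add_card_filter_not (s := J) (fun i => (q₀ : ℤ) ∣ x i)
    omega
  have hOd : ∀ i ∈ O, ∀ q ∈ M, (q : ℤ) ∣ x i := by
    intro i hi q hqM
    by_contra hcon
    exact hsame q hqM q₀ hq₀ i (Finset.mem_filter.1 hi).1 hcon (Finset.mem_filter.1 hi).2
  -- the tests killed on `J` all lie in `{p, p ^ 2}`
  have hKs : K ⊆ {p, p ^ 2} := by
    intro N hN
    have hN1 := hKT hN
    have hN2 := hKd N hN
    rcases Finset.mem_insert.1 hN1 with rfl | h
    · simp
    by_cases hNp : N = p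
    · simp [hNp]
    · exfalso
      have h2 := htwo N (Finset.mem_erase.2 ⟨hNp, h⟩)
      rw [Finset.filter_false_of_mem (by simpa using hN2)] at h2
      simp at h2
  obtain ⟨J', hJ'O, hJ', K', hK'T, -, hJ'c⟩ := prune_set x (({p, p ^ 2} : Finset ℕ) \ K) O
  have hJ'J : ∀ i ∈ J', i ∈ J := fun i hi => (Finset.mem_filter.1 (hJ'O hi)).1
  have hcK : (({p, p ^ 2} : Finset ℕ) \ K).card + K.card ≤ 2 := by
    rw [Finset.card_sdiff_add_card_eq_card hKs]
    exact Finset.card_le_two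
  have hJ'ne : J'.Nonempty := by
    apply Finset.card_pos.1
    have := Finset.card_le_card hK'T
    omega
  have hzero : ∀ N : ℕ, (∀ i ∈ J', (N : ℤ) ∣ x i) →
      (J'.filter (fun i => ¬ (N : ℤ) ∣ x i)).card = 0 := by
    intro N hN
    rw [Finset.filter_false_of_mem (by simpa using hN)]
    simp
  have hpp : ∀ N ∈ ({p, p ^ 2} : Finset ℕ), (J'.filter (fun i => ¬ (N : ℤ) ∣ x i)).card ≠ 1 := by
    intro N hN
    by_cases hNK : N ∈ K
    · rw [hzero N fun i hi => hKd N hNK i (hJ'J i hi)]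
      norm_num
    · exact hJ' N (Finset.mem_sdiff.2 ⟨hN, hNK⟩)
  refine finish hn0 hp hpn hv hq hp7 S J' hJ'ne x hx ?_ (hpp _ (by simp)) (Or.inr (Or.inr ?_))
  · intro q hq'
    by_cases hqp : q = p
    · exact hpp q (by simp [hqp])
    · rw [hzero q fun i hi => hOd i (hJ'O hi) q (Finset.mem_erase.2 ⟨hqp, hq'⟩)]
      norm_num
  · refine ⟨q₀, hq₀, ?_⟩
    rw [hzero q₀ fun i hi => hOd i (hJ'O hi) q₀ hq₀]
    norm_num

lemma lower {n : ℕ} (hn0 : n ≠ 0) (k : ℕ) (hk : k ≤ n.primeFactorsList.length) :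
    ∃ S : Fin k → ZMod n, ¬ HasWZSSub (JSet n) S := by
  have : NeZero n := ⟨hn0⟩
  set L := n.primeFactorsList with hL
  refine ⟨fun i => (((L.take i).prod : ℕ) : ZMod n), ?_⟩
  rintro ⟨I, hI, a, ha, hs⟩
  set i := I.min' hI with hi
  have hiI : i ∈ I := Finset.min'_mem _ _
  have hil : (i : ℕ) < L.length := i.2.trans_le hk
  have hpref : ∀ j : ℕ, (i : ℕ) + 1 ≤ j → (L.take (i + 1)).prod ∣ (L.take j).prod := by
    intro j hj
    exact ((List.take_prefix_take_left hj).sublist).prod_dvd_prod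
  have hLn : L.prod = n := Nat.prod_primeFactorsList hn0
  have hdn : (L.take (i + 1)).prod ∣ n := by
    conv_rhs => rw [← hLn]
    exact ((List.take_prefix _ _).sublist).prod_dvd_prod
  have hN : n ∣ ∑ j ∈ I, (a j).val * (L.take j).prod := by
    rw [← ZMod.natCast_eq_zero_iff]
    push_cast
    simpa using hs
  rw [← Finset.add_sum_erase _ _ hiI] at hN
  have hrest : (L.take (i + 1)).prod ∣ ∑ j ∈ I.erase i, (a j).val * (L.take j).prod := by
    refine Finset.dvd_sum fun j hj => (hpref j ?_).mul_left _
    have hle : i ≤ j := Finset.min'_le _ _ (Finset.mem_of_mem_erase hj)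
    have : i < j := lt_of_le_of_ne hle (Finset.ne_of_mem_erase hj).symm
    exact this
  have h1 : (L.take (i + 1)).prod ∣ (a i).val * (L.take i).prod :=
    (Nat.dvd_add_left hrest).1 (hdn.trans hN)
  rw [List.prod_take_succ _ _ hil, mul_comm] at h1
  have hpos : 0 < (L.take i).prod := by
    apply Nat.pos_of_ne_zero
    apply List.prod_ne_zero
    intro h
    exact Nat.not_prime_zero (Nat.prime_of_mem_primeFactorsList (List.mem_of_mem_take h))
  have h2 : L[(i : ℕ)] ∣ (a i).val := Nat.dvd_of_mul_dvd_mul_right hpos h1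
  have hmem : L[(i : ℕ)] ∈ L := List.getElem_mem hil
  have hu := (ha i hiI).1
  rw [← ZMod.natCast_zmod_val (a i), ZMod.isUnit_iff_coprime] at hu
  exact Nat.not_coprime_of_dvd_of_dvd (Nat.prime_of_mem_primeFactorsList hmem).one_lt h2
    (Nat.dvd_of_mem_primeFactorsList hmem) hu

lemma length_eq {n p : ℕ} (hn0 : n ≠ 0) (hp : p.Prime) (hpn : p ∣ n) (hv : n.factorization p = 2)
    (hq : ∀ q : ℕ, q.Prime → q ∣ n → q ≠ p → n.factorization q = 1) :
    n.primeFactorsList.length = n.primeFactors.card + 1 := by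
  have hpm : p ∈ n.primeFactors := Nat.mem_primeFactors.2 ⟨hp, hpn, hn0⟩
  rw [← ArithmeticFunction.cardFactors_apply, ArithmeticFunction.cardFactors_eq_sum_factorization,
    Finsupp.sum, Nat.support_factorization, ← Finset.add_sum_erase _ _ hpm, hv,
    ← Finset.card_erase_add_one hpm]
  have : ∑ q ∈ n.primeFactors.erase p, n.factorization q = ∑ q ∈ n.primeFactors.erase p, 1 := by
    apply Finset.sum_congr rfl
    intro q hq'
    have h := Nat.mem_primeFactors.1 (Finset.mem_of_mem_erase hq')
    exact hq q h.1 h.2.1 (Finset.ne_of_mem_erase hq')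
  rw [this]
  simp
  omega

end DavAux

theorem davenport_S_nonsquarefree (n p' : ℕ) (hodd : Odd n) (hp' : p'.Prime)
    (hp'n : p' ∣ n) (hv : n.factorization p' = 2)
    (hq : ∀ q : ℕ, q.Prime → q ∣ n → q ≠ p' → n.factorization q = 1)
    (hp7 : ∀ p : ℕ, p.Prime → p ∣ n → 7 ≤ p)
    (homega : n.primeFactors.card ≠ 2) :
    DavW n (JSet n) = (Nat.primeFactorsList n).length + 1 := by
  have hn0 : n ≠ 0 := by rintro rfl; simp at hodd
  have hlen := DavAux.length_eq hn0 hp' hp'n hv hq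
  apply le_antisymm
  · refine Nat.sInf_le ⟨by omega, ?_⟩
    rw [hlen]
    exact DavAux.upper hn0 hp' hp'n hv hq hp7 homega
  · refine le_csInf ⟨n.primeFactorsList.length + 1, by omega, ?_⟩ ?_
    · rw [hlen]
      exact DavAux.upper hn0 hp' hp'n hv hq hp7 homega
    · rintro k ⟨_, hk⟩
      by_contra hcon
      obtain ⟨S, hS⟩ := DavAux.lower hn0 k (by omega)
      exact hS (hk S)
end

section
/- Let n = p'²·q, where p' and q are distinct primes, both at least 7, and let A = S(n). Then D_A(n) = 5. -/
open scoped BigOperators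

lemma comb_aux (V0 V1 N : Finset (Fin 5)) (hd : Disjoint V0 V1) :
    ∃ I : Finset (Fin 5), I.Nonempty ∧
      (1 < (I ∩ V0).card ∨ ((I ∩ V0) = ∅ ∧ 1 < (I ∩ V1).card) ∨ ((I ∩ V0) = ∅ ∧ (I ∩ V1) = ∅)) ∧
      ((I ∩ N) = ∅ ∨ 2 < (I ∩ N).card) := by
  by_cases h1 : ∃ z, z ∉ N ∧ z ∉ V0 ∧ z ∉ V1
  · obtain ⟨z, hz, hz0, hz1⟩ := h1
    refine ⟨{z}, by simp, Or.inr (Or.inr ⟨?_, ?_⟩), Or.inl ?_⟩ <;>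
      simp [Finset.singleton_inter_of_notMem, *]
  by_cases h2 : 1 < (V0 \ N).card
  · refine ⟨V0 \ N, Finset.card_pos.1 (by omega), Or.inl ?_, Or.inl (by simp)⟩
    rwa [Finset.inter_eq_left.2 Finset.sdiff_subset]
  have e01 : V1 ∩ V0 = ∅ := by rw [Finset.inter_comm]; exact Finset.disjoint_iff_inter_eq_empty.1 hd
  by_cases h3 : 1 < (V1 \ N).card
  · refine ⟨V1 \ N, Finset.card_pos.1 (by omega), Or.inr (Or.inl ⟨?_, ?_⟩), Or.inl (by simp)⟩
    · ext x; have := Finset.ext_iff.1 e01 x; simp at this ⊢; tauto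
    · rwa [Finset.inter_eq_left.2 Finset.sdiff_subset]
  have hsub : (V0 ∪ V1)ᶜ ⊆ N := by
    intro z hz; by_contra h; apply h1; refine ⟨z, h, ?_⟩; simpa using hz
  by_cases h4 : 2 < ((V0 ∪ V1)ᶜ).card
  · refine ⟨(V0 ∪ V1)ᶜ, Finset.card_pos.1 (by omega), Or.inr (Or.inr ⟨?_, ?_⟩), Or.inr ?_⟩
    · ext x; simp; tauto
    · ext x; simp
    · rwa [Finset.inter_eq_left.2 hsub]
  have hc : (V0 ∪ V1).card = V0.card + V1.card := Finset.card_union_of_disjoint hd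
  have hc' : ((V0 ∪ V1)ᶜ).card = 5 - (V0 ∪ V1).card := by rw [Finset.card_compl, Fintype.card_fin]
  have hZ : Nᶜ ⊆ (V0 \ N) ∪ (V1 \ N) := by
    intro z hz
    by_contra h
    apply h1
    refine ⟨z, by simpa using hz, ?_⟩
    simp at h hz; tauto
  have hZc := (Finset.card_le_card hZ).trans (Finset.card_union_le _ _)
  have hNc : Nᶜ.card = 5 - N.card := by simp [Finset.card_compl]
  have hN5 : N.card ≤ 5 := by simpa using Finset.card_le_univ N
  have hV5 : (V0 ∪ V1).card ≤ 5 := by simpa using Finset.card_le_univ (V0 ∪ V1)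
  by_cases h5 : V0.card = 1
  · refine ⟨V0ᶜ, ?_, Or.inr (Or.inl ⟨by ext x; simp, ?_⟩), Or.inr ?_⟩
    · apply Finset.card_pos.1; rw [Finset.card_compl, Fintype.card_fin]; omega
    · have : V0ᶜ ∩ V1 = V1 := by
        ext x; have := Finset.ext_iff.1 e01 x; simp only [Finset.mem_inter, Finset.mem_compl, Finset.notMem_empty] at this ⊢; tauto
      rw [this]; omega
    · have e : (V0ᶜ ∩ N)ᶜ ⊆ V0 ∪ (V1 \ N) := by
        intro z hz
        by_contra h
        apply h1
        simp at h hz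
        refine ⟨z, ?_⟩
        tauto
      have := (Finset.card_le_card e).trans (Finset.card_union_le _ _)
      rw [Finset.card_compl, Fintype.card_fin] at this
      omega
  · refine ⟨Finset.univ, by simp, ?_, Or.inr (by simp; omega)⟩
    simp only [Finset.univ_inter]
    by_cases h6 : V0.card = 0
    · right; left; exact ⟨Finset.card_eq_zero.1 h6, by omega⟩
    · left; omega

section Pside
variable {p : ℕ}

lemma isUnit_iff_cast (hp : p.Prime) (x : ZMod (p ^ 2)) :
    IsUnit x ↔ ZMod.castHom (dvd_pow_self p two_ne_zero) (ZMod p) x ≠ 0 := by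
  have : NeZero p := ⟨hp.ne_zero⟩
  obtain ⟨m, rfl⟩ := ZMod.natCast_zmod_surjective x
  rw [map_natCast, ZMod.isUnit_iff_coprime, Ne, ZMod.natCast_eq_zero_iff,
    Nat.coprime_pow_right_iff (by norm_num), Nat.coprime_comm, hp.coprime_iff_not_dvd]

lemma nonunit_eq (hp : p.Prime) (x : ZMod (p ^ 2)) (h : ¬ IsUnit x) :
    ∃ y, x = (p : ZMod (p ^ 2)) * y := by
  have : NeZero p := ⟨hp.ne_zero⟩
  rw [isUnit_iff_cast hp, not_not] at h
  obtain ⟨m, rfl⟩ := ZMod.natCast_zmod_surjective x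
  rw [map_natCast, ZMod.natCast_eq_zero_iff] at h
  obtain ⟨k, rfl⟩ := h
  exact ⟨k, by push_cast; rfl⟩

lemma p_mul_nonunit (hp : p.Prime) (y : ZMod (p ^ 2)) (h : ¬ IsUnit y) :
    (p : ZMod (p ^ 2)) * y = 0 := by
  obtain ⟨z, rfl⟩ := nonunit_eq hp y h
  have : (p : ZMod (p ^ 2)) * p = 0 := by
    have := ZMod.natCast_self (p ^ 2)
    push_cast at this
    rw [← this]; ring
  rw [← mul_assoc, this, zero_mul]

lemma two_units (hp : p.Prime) (hp3 : 3 ≤ p) (x y t : ZMod (p ^ 2)) (hx : IsUnit x) (hy : IsUnit y) :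
    ∃ u v, IsUnit u ∧ IsUnit v ∧ u * x + v * y = t := by
  have : Fact p.Prime := ⟨hp⟩
  have key : ∃ u v : ZMod (p ^ 2), IsUnit u ∧ IsUnit v ∧ u + v = t := by
    by_cases h : IsUnit (t - 1)
    · exact ⟨1, t - 1, isUnit_one, h, by ring⟩
    · refine ⟨2, t - 2, ?_, ?_, by ring⟩
      · rw [isUnit_iff_cast hp, map_ofNat]
        intro h2
        have h2' : ((2 : ℕ) : ZMod p) = 0 := by exact_mod_cast h2
        rw [ZMod.natCast_eq_zero_iff] at h2'
        have := Nat.le_of_dvd (by norm_num) h2'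
        omega
      · rw [isUnit_iff_cast hp, not_not] at h
        rw [isUnit_iff_cast hp, show t - 2 = (t - 1) - 1 by ring, map_sub, h, map_one]
        simp
  obtain ⟨u, v, hu, hv, h⟩ := key
  obtain ⟨x, rfl⟩ := hx
  obtain ⟨y, rfl⟩ := hy
  refine ⟨u * (x⁻¹ : (ZMod (p ^ 2))ˣ), v * (y⁻¹ : (ZMod (p ^ 2))ˣ), hu.mul (Units.isUnit _), hv.mul (Units.isUnit _), ?_⟩
  simpa using h

lemma P1 (hp : p.Prime) (hp3 : 3 ≤ p) {ι : Type} [DecidableEq ι] (I : Finset ι) (x : ι → ZMod (p ^ 2))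
    (i j : ι) (hi : i ∈ I) (hj : j ∈ I) (hij : i ≠ j) (hx : IsUnit (x i)) (hy : IsUnit (x j)) :
    ∃ u : ι → ZMod (p ^ 2), (∀ k, IsUnit (u k)) ∧ ∑ k ∈ I, u k * x k = 0 := by
  obtain ⟨a, b, ha, hb, h⟩ := two_units hp hp3 (x i) (x j) (-∑ k ∈ (I.erase i).erase j, x k) hx hy
  refine ⟨fun k => if k = i then a else if k = j then b else 1, ?_, ?_⟩
  · intro k; dsimp only; split_ifs <;> simp [*]
  · rw [← Finset.add_sum_erase I _ hi, ← Finset.add_sum_erase (I.erase i) _ (Finset.mem_erase.2 ⟨hij.symm, hj⟩)]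
    have : ∑ k ∈ (I.erase i).erase j, (if k = i then a else if k = j then b else 1) * x k
        = ∑ k ∈ (I.erase i).erase j, x k := by
      apply Finset.sum_congr rfl
      intro k hk
      simp at hk
      simp [hk.1, hk.2.1]
    rw [this]
    simp only [if_true, hij.symm, if_false]
    rw [← add_assoc, h]; ring
end Pside

section Qside
variable {q : ℕ}

lemma three_sq [hq : Fact q.Prime] (hq7 : 7 ≤ q) (a b c t : ZMod q) (ha : a ≠ 0) (hb : b ≠ 0) (hc : c ≠ 0) :
    ∃ x y z : ZMod q, x ≠ 0 ∧ y ≠ 0 ∧ z ≠ 0 ∧ x ^ 2 * a + y ^ 2 * b + z ^ 2 * c = t := by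
  classical
  let T : ZMod q → Finset (ZMod q) := fun a => (Finset.univ.erase (0 : ZMod q)).image (fun x => x ^ 2 * a)
  have hT : ∀ a : ZMod q, a ≠ 0 → q - 1 ≤ 2 * (T a).card := by
    intro a ha
    have := Finset.card_le_mul_card_image (f := fun x => x ^ 2 * a) (Finset.univ.erase (0 : ZMod q)) 2 ?_
    · simpa [Finset.card_erase_of_mem, ZMod.card] using this
    · intro b hb
      obtain ⟨x, hx, rfl⟩ := Finset.mem_image.1 hb
      refine (Finset.card_le_card (t := {x, -x}) ?_).trans Finset.card_le_two
      intro y hy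
      simp only [Finset.mem_filter] at hy
      have := mul_right_cancel₀ ha hy.2
      simpa using sq_eq_sq_iff_eq_or_eq_neg.1 this
  have hne : ∀ a : ZMod q, a ≠ 0 → (T a).Nonempty := fun a ha => by
    have := hT a ha
    apply Finset.card_pos.1; omega
  open Pointwise in
  have huniv : T a + T b + T c = Finset.univ := by
    have h1 := ZMod.cauchy_davenport hq.out (hne a ha) (hne b hb)
    have h2 := ZMod.cauchy_davenport hq.out ((hne a ha).add (hne b hb)) (hne c hc)
    have := hT a ha
    have := hT b hb
    have := hT c hc
    have hodd : q % 2 = 1 := Nat.odd_iff.1 (hq.out.odd_of_ne_two (by omega))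
    rw [← Finset.card_eq_iff_eq_univ, ZMod.card]
    have h3 : (T a + T b + T c).card ≤ q := by
      simpa [ZMod.card] using Finset.card_le_univ (T a + T b + T c)
    omega
  have ht : t ∈ T a + T b + T c := by rw [huniv]; simp
  simp only [Finset.mem_add, T, Finset.mem_image, Finset.mem_erase] at ht
  obtain ⟨_, ⟨_, ⟨x, ⟨hx, _⟩, rfl⟩, _, ⟨y, ⟨hy, _⟩, rfl⟩, rfl⟩, _, ⟨z, ⟨hz, _⟩, rfl⟩, h⟩ := ht
  exact ⟨x, y, z, hx, hy, hz, h⟩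

lemma Q1 [hq : Fact q.Prime] (hq7 : 7 ≤ q) {ι : Type} [DecidableEq ι] (I : Finset ι) (x : ι → ZMod q)
    (i j k : ι) (hi : i ∈ I) (hj : j ∈ I) (hk : k ∈ I) (hij : i ≠ j) (hik : i ≠ k) (hjk : j ≠ k)
    (hx : x i ≠ 0) (hy : x j ≠ 0) (hz : x k ≠ 0) :
    ∃ u : ι → ZMod q, (∀ k, u k ≠ 0) ∧ ∑ k ∈ I, u k ^ 2 * x k = 0 := by
  obtain ⟨a, b, c, ha, hb, hc, h⟩ :=
    three_sq hq7 (x i) (x j) (x k) (-∑ l ∈ ((I.erase i).erase j).erase k, x l) hx hy hz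
  refine ⟨fun l => if l = i then a else if l = j then b else if l = k then c else 1, ?_, ?_⟩
  · intro k; dsimp only; split_ifs <;> simp [*]
  · rw [← Finset.add_sum_erase I _ hi,
      ← Finset.add_sum_erase (I.erase i) _ (Finset.mem_erase.2 ⟨hij.symm, hj⟩),
      ← Finset.add_sum_erase ((I.erase i).erase j) _
        (Finset.mem_erase.2 ⟨hjk.symm, Finset.mem_erase.2 ⟨hik.symm, hk⟩⟩)]
    have : ∑ l ∈ ((I.erase i).erase j).erase k,
        (if l = i then a else if l = j then b else if l = k then c else 1) ^ 2 * x l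
        = ∑ l ∈ ((I.erase i).erase j).erase k, x l := by
      apply Finset.sum_congr rfl
      intro l hl
      simp at hl
      simp [hl.1, hl.2.1, hl.2.2.1]
    rw [this]
    simp only [if_true, hij.symm, hik.symm, hjk.symm, if_false]
    rw [← add_assoc, ← add_assoc, h]; ring
end Qside

lemma mem_JSet_iff {p q : ℕ} (hp : p.Prime) [hq : Fact q.Prime] (h : Nat.Coprime (p ^ 2) q)
    (a : ZMod (p ^ 2 * q)) :
    a ∈ JSet (p ^ 2 * q) ↔ IsUnit (ZMod.chineseRemainder h a).1 ∧
      ∃ r, r ≠ 0 ∧ (ZMod.chineseRemainder h a).2 = r ^ 2 := by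
  have : NeZero p := ⟨hp.ne_zero⟩
  have : NeZero q := ⟨hq.out.ne_zero⟩
  have hu : IsUnit a ↔ IsUnit (ZMod.chineseRemainder h a).1 ∧ IsUnit (ZMod.chineseRemainder h a).2 := by
    rw [← Prod.isUnit_iff]
    exact (MulEquiv.isUnit_map (ZMod.chineseRemainder h)).symm
  have hcast : (ZMod.chineseRemainder h a).2 = ((a.val : ℤ) : ZMod q) := by
    conv_lhs => rw [← ZMod.natCast_zmod_val a]
    rw [map_natCast]; simp
  simp only [JSet, Set.mem_ofPred_eq]
  rw [hu, and_assoc]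
  refine and_congr_right fun h1 => ?_
  have hpne : jacobiSym (a.val : ℤ) p ^ 2 = 1 := by
    apply jacobiSym.sq_one
    have hp1 : IsUnit ((a.val : ℕ) : ZMod (p ^ 2)) := by
      have : (ZMod.chineseRemainder h a).1 = ((a.val : ℕ) : ZMod (p ^ 2)) := by
        conv_lhs => rw [← ZMod.natCast_zmod_val a]
        rw [map_natCast]; simp
      rwa [← this]
    rw [ZMod.isUnit_iff_coprime, Nat.coprime_pow_right_iff (by norm_num)] at hp1
    exact_mod_cast hp1
  rw [jacobiSym.mul_right, jacobiSym.pow_right, hpne, one_mul, ← jacobiSym.legendreSym.to_jacobiSym, hcast, isUnit_iff_ne_zero]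
  constructor
  · rintro ⟨h0, hl⟩
    rw [legendreSym.eq_one_iff q h0] at hl
    obtain ⟨r, hr⟩ := hl
    refine ⟨r, ?_, by rw [hr, sq]⟩
    rintro rfl
    exact h0 (by rw [hr, zero_mul])
  · rintro ⟨r, hr, e⟩
    have h0 : ((a.val : ℤ) : ZMod q) ≠ 0 := by rw [e]; exact pow_ne_zero _ hr
    exact ⟨h0, (legendreSym.eq_one_iff q h0).2 ⟨r, by rw [e, sq]⟩⟩

lemma upper_s18 {p q : ℕ} (hp : p.Prime) [hq : Fact q.Prime] (hp7 : 7 ≤ p) (hq7 : 7 ≤ q)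
    (h : Nat.Coprime (p ^ 2) q) (S : Fin 5 → ZMod (p ^ 2 * q)) : HasWZSSub (JSet (p ^ 2 * q)) S := by
  classical
  set e := ZMod.chineseRemainder h with he
  have hyex : ∀ i, ∃ y, ¬ IsUnit (e (S i)).1 → (e (S i)).1 = (p : ZMod (p ^ 2)) * y := by
    intro i
    by_cases hu : IsUnit (e (S i)).1
    · exact ⟨0, fun h => absurd hu h⟩
    · obtain ⟨y, hy⟩ := nonunit_eq hp _ hu
      exact ⟨y, fun _ => hy⟩
  choose y hy using hyex
  obtain ⟨I, hI, hP, hQ⟩ := comb_aux (Finset.univ.filter fun i => IsUnit (e (S i)).1)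
    (Finset.univ.filter fun i => ¬ IsUnit (e (S i)).1 ∧ IsUnit (y i))
    (Finset.univ.filter fun i => (e (S i)).2 ≠ 0)
    (by rw [Finset.disjoint_left]; intro i hi; simp at hi ⊢; tauto)
  have hP' : ∃ u : Fin 5 → ZMod (p ^ 2), (∀ k, IsUnit (u k)) ∧ ∑ k ∈ I, u k * (e (S k)).1 = 0 := by
    rcases hP with hP | ⟨h0, hP⟩ | ⟨h0, h1⟩
    · obtain ⟨i, hi, j, hj, hij⟩ := Finset.one_lt_card.1 hP
      simp at hi hj
      exact P1 hp (by omega) I (fun k => (e (S k)).1) i j hi.1 hj.1 hij hi.2 hj.2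
    · obtain ⟨i, hi, j, hj, hij⟩ := Finset.one_lt_card.1 hP
      simp at hi hj
      obtain ⟨u, hu, hs⟩ := P1 hp (by omega) I y i j hi.1 hj.1 hij hi.2.2 hj.2.2
      refine ⟨u, hu, ?_⟩
      have : ∑ k ∈ I, u k * (e (S k)).1 = (p : ZMod (p ^ 2)) * ∑ k ∈ I, u k * y k := by
        rw [Finset.mul_sum]
        apply Finset.sum_congr rfl
        intro k hk
        have := Finset.ext_iff.1 h0 k
        simp [hk] at this
        rw [hy k this]; ring
      rw [this, hs, mul_zero]
    · refine ⟨fun _ => 1, fun _ => isUnit_one, Finset.sum_eq_zero fun k hk => ?_⟩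
      have a0 := Finset.ext_iff.1 h0 k
      have a1 := Finset.ext_iff.1 h1 k
      simp [hk] at a0 a1
      rw [hy k a0, p_mul_nonunit hp _ (a1 a0), mul_zero]
  have hQ' : ∃ u : Fin 5 → ZMod q, (∀ k, u k ≠ 0) ∧ ∑ k ∈ I, u k ^ 2 * (e (S k)).2 = 0 := by
    rcases hQ with hQ | hQ
    · refine ⟨fun _ => 1, fun _ => one_ne_zero, Finset.sum_eq_zero fun k hk => ?_⟩
      have a0 := Finset.ext_iff.1 hQ k
      simp [hk] at a0
      rw [a0, mul_zero]
    · obtain ⟨i, j, k, hi, hj, hk, hij, hik, hjk⟩ := Finset.two_lt_card_iff.1 hQ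
      simp at hi hj hk
      exact Q1 hq7 I (fun k => (e (S k)).2) i j k hi.1 hj.1 hk.1 hij hik hjk hi.2 hj.2 hk.2
  obtain ⟨u, hu, hus⟩ := hP'
  obtain ⟨r, hr, hrs⟩ := hQ'
  refine ⟨I, hI, fun i => e.symm (u i, r i ^ 2), fun i _ => ?_, ?_⟩
  · rw [mem_JSet_iff hp h, ← he]
    simp only [RingEquiv.apply_symm_apply]
    exact ⟨hu i, r i, hr i, rfl⟩
  · apply e.injective
    rw [map_sum, map_zero]
    simp only [map_mul, RingEquiv.apply_symm_apply]
    ext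
    · rw [Prod.fst_sum]; simpa using hus
    · rw [Prod.snd_sum]; simpa using hrs

lemma hasWZSSub_castLE {n k l : ℕ} (A : Set (ZMod n)) (hkl : k ≤ l) (S : Fin l → ZMod n)
    (h : HasWZSSub A (fun i : Fin k => S (Fin.castLE hkl i))) : HasWZSSub A S := by
  obtain ⟨I, hI, a, ha, hs⟩ := h
  refine ⟨I.map (Fin.castLEEmb hkl), hI.map, fun j => if h : j.1 < k then a ⟨j.1, h⟩ else 0, ?_, ?_⟩
  · intro j hj
    obtain ⟨i, hi, rfl⟩ := Finset.mem_map.1 hj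
    simpa using ha i hi
  · rw [Finset.sum_map]
    simpa using hs

lemma lower_s18 {p q : ℕ} (hp : p.Prime) [hq : Fact q.Prime] (hq7 : 7 ≤ q)
    (h : Nat.Coprime (p ^ 2) q) :
    ∃ S : Fin 4 → ZMod (p ^ 2 * q), ¬ HasWZSSub (JSet (p ^ 2 * q)) S := by
  classical
  set e := ZMod.chineseRemainder h with he
  obtain ⟨g, hg⟩ := FiniteField.exists_nonsquare (F := ZMod q)
    (by rw [ZMod.ringChar_zmod_n]; omega)
  have hg0 : g ≠ 0 := by rintro rfl; exact hg (IsSquare.zero)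
  refine ⟨![e.symm (1, 0), e.symm (p, 0), e.symm (0, 1), e.symm (0, -g)], ?_⟩
  rintro ⟨I, hI, a, ha, hs⟩
  have hF : Fact p.Prime := ⟨hp⟩
  have : Fact (1 < p ^ 2) := ⟨Nat.one_lt_pow two_ne_zero hp.one_lt⟩
  have ha' : ∀ i ∈ I, IsUnit (e (a i)).1 ∧ ∃ r, r ≠ 0 ∧ (e (a i)).2 = r ^ 2 :=
    fun i hi => (mem_JSet_iff hp h _).1 (ha i hi)
  have hs' := congrArg e hs
  rw [← Finset.univ_inter I, ← Finset.sum_ite_mem, Fin.sum_univ_four] at hs'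
  have h1 := congrArg Prod.fst hs'
  have h2 := congrArg Prod.snd hs'
  simp only [map_add, map_zero, apply_ite e, apply_ite Prod.fst, apply_ite Prod.snd, map_mul,
    Prod.fst_add, Prod.snd_add, Prod.fst_mul, Prod.snd_mul, Matrix.cons_val,
    RingEquiv.apply_symm_apply, Prod.fst_zero, Prod.snd_zero, mul_zero, mul_one, ite_self,
    add_zero, zero_add] at h1 h2
  have hpz : ∀ u : ZMod (p ^ 2), IsUnit u → u * (p : ZMod (p ^ 2)) ≠ 0 := by
    intro u hu h0
    rw [hu.mul_right_eq_zero, ZMod.natCast_eq_zero_iff] at h0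
    have := Nat.le_of_dvd hp.pos h0
    nlinarith [hp.two_le]
  have m0 : (0 : Fin 4) ∉ I := by
    intro h0
    have hu := (ha' 0 h0).1
    rw [isUnit_iff_cast hp] at hu
    apply hu
    rw [if_pos h0] at h1
    have := congrArg (ZMod.castHom (dvd_pow_self p two_ne_zero) (ZMod p)) h1
    rw [map_add, map_zero] at this
    split_ifs at this
    · rw [map_mul, map_natCast, ZMod.natCast_self, mul_zero, add_zero] at this
      exact this
    · simpa using this
  have m1 : (1 : Fin 4) ∉ I := by
    intro h0
    rw [if_neg m0, if_pos h0, zero_add] at h1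
    exact hpz _ (ha' 1 h0).1 h1
  have m2 : (2 : Fin 4) ∉ I := by
    intro h0
    obtain ⟨-, r, hr, er⟩ := ha' 2 h0
    rw [if_pos h0, er] at h2
    split_ifs at h2 with h3
    · obtain ⟨-, s, hs0, es⟩ := ha' 3 h3
      rw [es] at h2
      apply hg
      refine ⟨r / s, ?_⟩
      field_simp
      linear_combination -h2
    · exact hr (by simpa using h2)
  have m3 : (3 : Fin 4) ∉ I := by
    intro h0
    obtain ⟨-, r, hr, er⟩ := ha' 3 h0
    rw [if_neg m2, if_pos h0, er] at h2
    simp [hr, hg0] at h2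
  obtain ⟨i, hi⟩ := hI
  fin_cases i
  · exact m0 hi
  · exact m1 hi
  · exact m2 hi
  · exact m3 hi

theorem davenport_S_ppq (n p' q : ℕ) (hp' : p'.Prime) (hq : q.Prime) (hne : p' ≠ q)
    (hp7 : 7 ≤ p') (hq7 : 7 ≤ q) (hn : n = p' ^ 2 * q) :
    DavW n (JSet n) = 5 := by
  subst hn
  have : Fact q.Prime := ⟨hq⟩
  have hc : Nat.Coprime (p' ^ 2) q := ((Nat.coprime_primes hp' hq).2 hne).pow_left 2
  apply le_antisymm
  · exact Nat.sInf_le ⟨by norm_num, upper_s18 hp' hp7 hq7 hc⟩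
  · refine le_csInf ⟨5, by norm_num, upper_s18 hp' hp7 hq7 hc⟩ ?_
    rintro k ⟨_, hk⟩
    by_contra hlt
    obtain ⟨S, hS⟩ := lower_s18 hp' hq7 hc
    exact hS (hasWZSSub_castLE _ (by omega : k ≤ 4) S (hk _))
end
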